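/- There is a unique ℂ-algebra isomorphism HC from ℬ_t onto the spherical double affine Hecke algebra eH_{t,q}e determined by HC(c₁) = e(Y₁+Y₂)e, HC(c₂) = q²·e(Y₁Y₂)e, HC(d₁) = e(X₁+X₂)e, HC(d₂) = q²·e(X₁X₂)e, and HC(r) = e(t⁻²Y₁X₁ + Y₂X₂)e. -/

import Mathlib

noncomputable section

/-- Generators of the double affine Hecke algebra of type GL₂:
`T, T⁻¹, X₁, X₁⁻¹, X₂, X₂⁻¹, Y₁, Y₁⁻¹, Y₂, Y₂⁻¹`. -/
inductive DGen : Type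
  | T | Ti | X1 | X1i | X2 | X2i | Y1 | Y1i | Y2 | Y2i

abbrev FD : Type := FreeAlgebra ℂ DGen

def gD : DGen → FD := FreeAlgebra.ι ℂ

/-- The defining relations of the double affine Hecke algebra `H_{t,q}` of type GL₂. -/
inductive DRel (q t : ℂ) : FD → FD → Prop
  | TTi : DRel q t (gD .T * gD .Ti) 1
  | TiT : DRel q t (gD .Ti * gD .T) 1
  | X1X1i : DRel q t (gD .X1 * gD .X1i) 1
  | X1iX1 : DRel q t (gD .X1i * gD .X1) 1
  | X2X2i : DRel q t (gD .X2 * gD .X2i) 1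
  | X2iX2 : DRel q t (gD .X2i * gD .X2) 1
  | Y1Y1i : DRel q t (gD .Y1 * gD .Y1i) 1
  | Y1iY1 : DRel q t (gD .Y1i * gD .Y1) 1
  | Y2Y2i : DRel q t (gD .Y2 * gD .Y2i) 1
  | Y2iY2 : DRel q t (gD .Y2i * gD .Y2) 1
  | TX1T : DRel q t (gD .T * gD .X1 * gD .T) (gD .X2)
  | TiY1Ti : DRel q t (gD .Ti * gD .Y1 * gD .Ti) (gD .Y2)
  | Xcomm : DRel q t (gD .X1 * gD .X2) (gD .X2 * gD .X1)
  | Ycomm : DRel q t (gD .Y1 * gD .Y2) (gD .Y2 * gD .Y1)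
  | YXX : DRel q t (gD .Y1 * (gD .X1 * gD .X2)) ((q ^ 2) • (gD .X1 * gD .X2 * gD .Y1))
  | X1iY2 : DRel q t (gD .X1i * gD .Y2) (gD .Y2 * gD .X1i * gD .Ti * gD .Ti)
  | hecke : DRel q t ((gD .T + algebraMap ℂ FD t⁻¹) * (gD .T - algebraMap ℂ FD t)) 0

/-- The double affine Hecke algebra `H_{t,q}` of type GL₂. -/
abbrev DAHA (q t : ℂ) : Type := RingQuot (DRel q t)

variable (q t : ℂ)

def T : DAHA q t := RingQuot.mkAlgHom ℂ (DRel q t) (gD .T)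
def Ti : DAHA q t := RingQuot.mkAlgHom ℂ (DRel q t) (gD .Ti)
def X1 : DAHA q t := RingQuot.mkAlgHom ℂ (DRel q t) (gD .X1)
def X1i : DAHA q t := RingQuot.mkAlgHom ℂ (DRel q t) (gD .X1i)
def X2 : DAHA q t := RingQuot.mkAlgHom ℂ (DRel q t) (gD .X2)
def X2i : DAHA q t := RingQuot.mkAlgHom ℂ (DRel q t) (gD .X2i)
def Y1 : DAHA q t := RingQuot.mkAlgHom ℂ (DRel q t) (gD .Y1)
def Y1i : DAHA q t := RingQuot.mkAlgHom ℂ (DRel q t) (gD .Y1i)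
def Y2 : DAHA q t := RingQuot.mkAlgHom ℂ (DRel q t) (gD .Y2)
def Y2i : DAHA q t := RingQuot.mkAlgHom ℂ (DRel q t) (gD .Y2i)

/-- Generators of the algebra `ℬ_t`: `c₁, c₂, c₂⁻¹, d₁, d₂, d₂⁻¹, r`. -/
inductive BGen : Type
  | c1 | c2 | c2i | d1 | d2 | d2i | r

abbrev FB : Type := FreeAlgebra ℂ BGen

def gB : BGen → FB := FreeAlgebra.ι ℂ

/-- The defining relations of the algebra `ℬ_t` (the paper's presentation of the
quantum Hamiltonian reduction of `𝒟_q(GL₂)` along the ideal `𝓘_t`). -/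
inductive BRel (q t : ℂ) : FB → FB → Prop
  | c2c2i : BRel q t (gB .c2 * gB .c2i) 1
  | c2ic2 : BRel q t (gB .c2i * gB .c2) 1
  | d2d2i : BRel q t (gB .d2 * gB .d2i) 1
  | d2id2 : BRel q t (gB .d2i * gB .d2) 1
  | c2c1 : BRel q t (gB .c2 * gB .c1) (gB .c1 * gB .c2)
  | d2d1 : BRel q t (gB .d2 * gB .d1) (gB .d1 * gB .d2)
  | d2c2 : BRel q t (gB .d2 * gB .c2) ((q⁻¹ ^ 4) • (gB .c2 * gB .d2))
  | d2c1 : BRel q t (gB .d2 * gB .c1) ((q⁻¹ ^ 2) • (gB .c1 * gB .d2))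
  | d1c2 : BRel q t (gB .d1 * gB .c2) ((q⁻¹ ^ 2) • (gB .c2 * gB .d1))
  | d1c1 : BRel q t (gB .d1 * gB .c1) (gB .c1 * gB .d1 + (q⁻¹ ^ 2 - 1) • gB .r)
  | d2r : BRel q t (gB .d2 * gB .r) ((q⁻¹ ^ 2) • (gB .r * gB .d2))
  | rc2 : BRel q t (gB .r * gB .c2) ((q⁻¹ ^ 2) • (gB .c2 * gB .r))
  | d1r : BRel q t (gB .d1 * gB .r)
      ((q⁻¹ ^ 2) • (gB .r * gB .d1) + ((1 - q⁻¹ ^ 2) * q⁻¹ ^ 2) • (gB .c1 * gB .d2))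
  | rc1 : BRel q t (gB .r * gB .c1)
      ((q⁻¹ ^ 2) • (gB .c1 * gB .r) + ((1 - q⁻¹ ^ 2) * q⁻¹ ^ 2) • (gB .c2 * gB .d1))
  | rr : BRel q t (gB .r * gB .r)
      ((q⁻¹ ^ 4 * (1 + t ^ 2) * (q⁻¹ ^ 2 + t⁻¹ ^ 2)) • (gB .c2 * gB .d2)
        - (q⁻¹ ^ 4) • (gB .c2 * gB .d1 * gB .d1)
        - (q⁻¹ ^ 4) • (gB .c1 * gB .c1 * gB .d2)
        + (q⁻¹ ^ 2) • (gB .c1 * gB .r * gB .d1))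

/-- The algebra `ℬ_t`. -/
abbrev AlgBt (q t : ℂ) : Type := RingQuot (BRel q t)

def c1 (q t : ℂ) : AlgBt q t := RingQuot.mkAlgHom ℂ (BRel q t) (gB .c1)
def c2 (q t : ℂ) : AlgBt q t := RingQuot.mkAlgHom ℂ (BRel q t) (gB .c2)
def d1 (q t : ℂ) : AlgBt q t := RingQuot.mkAlgHom ℂ (BRel q t) (gB .d1)
def d2 (q t : ℂ) : AlgBt q t := RingQuot.mkAlgHom ℂ (BRel q t) (gB .d2)
def rr (q t : ℂ) : AlgBt q t := RingQuot.mkAlgHom ℂ (BRel q t) (gB .r)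

/-- The symmetrizing idempotent `e = (1 + tT)/(1 + t²)` of the DAHA. -/
def eSym (q t : ℂ) : DAHA q t := ((1 + t ^ 2)⁻¹ : ℂ) • (1 + t • T q t)

set_option linter.unusedSimpArgs false

set_option linter.unusedSimpArgs false
/-- Normal-ordering relations. -/
structure DH (q t : ℂ) {A : Type*} [Ring A] [Algebra ℂ A] (T X1 X2 Y1 Y2 Wi Zi : A) : Prop where
  TT : T * T = 1 + (t - t⁻¹) • T
  TX1 : T * X1 = X2 * T - (t - t⁻¹) • X2
  TX2 : T * X2 = X1 * T + (t - t⁻¹) • X2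
  TY1 : T * Y1 = Y2 * T + (t - t⁻¹) • Y1
  TY2 : T * Y2 = Y1 * T - (t - t⁻¹) • Y1
  XX : X2 * X1 = X1 * X2
  YY : Y2 * Y1 = Y1 * Y2
  X1Y1 : X1 * Y1 = (q⁻¹ ^ 2) • (Y1 * X1 + (t - t⁻¹) ^ 2 • (Y2 * X2) - (t - t⁻¹) • (Y2 * X2 * T))
  X2Y2 : X2 * Y2 = (q⁻¹ ^ 2) • ((1 + (t - t⁻¹) ^ 2) • (Y2 * X2) - (t - t⁻¹) • (Y2 * X2 * T))
  X1Y2 : X1 * Y2 = Y2 * X1 + (t - t⁻¹) • (Y2 * X2 * T) - (t - t⁻¹) ^ 2 • (Y2 * X2)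
  X2Y1 : X2 * Y1 = Y1 * X2 + ((t - t⁻¹) * q⁻¹ ^ 2) • (Y2 * X2 * T - (t - t⁻¹) • (Y2 * X2))
  WiW : Wi * (Y1 * Y2) = 1
  WWi : Y1 * Y2 * Wi = 1
  ZiZ : Zi * (X1 * X2) = 1
  ZZi : X1 * X2 * Zi = 1

theorem inv_comm_aux {A : Type*} [Monoid A] {a ai b bi : A} (h1 : a * ai = 1) (h2 : ai * a = 1)
    (h3 : b * bi = 1) (h4 : bi * b = 1) (h : a * b = b * a) : bi * ai = ai * bi := by
  have : Commute (⟨a, ai, h1, h2⟩ : Aˣ) ⟨b, bi, h3, h4⟩ := Units.ext h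
  exact congrArg Units.val (this.inv_inv).symm.eq

theorem DH.mk' {q t : ℂ} (hq : q ≠ 0) (ht : t ≠ 0) {A : Type*} [Ring A] [Algebra ℂ A]
    {T Ti X1 X1i X2 X2i Y1 Y1i Y2 Y2i : A}
    (TTi : T * Ti = 1) (TiT : Ti * T = 1) (X1X1i : X1 * X1i = 1) (X1iX1 : X1i * X1 = 1)
    (X2X2i : X2 * X2i = 1) (X2iX2 : X2i * X2 = 1)
    (Y1Y1i : Y1 * Y1i = 1) (Y1iY1 : Y1i * Y1 = 1)
    (Y2Y2i : Y2 * Y2i = 1) (Y2iY2 : Y2i * Y2 = 1)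
    (TX1T : T * X1 * T = X2) (TiY1Ti : Ti * Y1 * Ti = Y2)
    (XX : X1 * X2 = X2 * X1) (YY : Y1 * Y2 = Y2 * Y1)
    (YXX : Y1 * (X1 * X2) = (q ^ 2) • (X1 * X2 * Y1))
    (X1iY2 : X1i * Y2 = Y2 * X1i * Ti * Ti)
    (hecke : (T + algebraMap ℂ A t⁻¹) * (T - algebraMap ℂ A t) = 0) :
    DH q t T X1 X2 Y1 Y2 (Y2i * Y1i) (X2i * X1i) ∧ Ti = T - (t - t⁻¹) • 1 ∧
      X1i = X2 * (X2i * X1i) ∧ X2i = X1 * (X2i * X1i) ∧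
      Y1i = Y2 * (Y2i * Y1i) ∧ Y2i = Y1 * (Y2i * Y1i) := by
  have TT : T * T = 1 + (t - t⁻¹) • T := by
    rw [Algebra.algebraMap_eq_smul_one, Algebra.algebraMap_eq_smul_one] at hecke
    have h2 : t • t⁻¹ • (1 : A) = 1 := by rw [smul_smul, mul_inv_cancel₀ ht, one_smul]
    simp only [add_mul, mul_sub, smul_mul_assoc, mul_smul_comm, one_mul, mul_one, smul_add, h2] at hecke
    rw [← sub_eq_zero, ← hecke, sub_smul]; abel
  have hTi : Ti = T - (t - t⁻¹) • 1 := by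
    have : T * (T - (t - t⁻¹) • 1) = 1 := by
      rw [mul_sub, TT]; simp
    calc Ti = Ti * (T * (T - (t - t⁻¹) • 1)) := by rw [this, mul_one]
      _ = _ := by rw [← mul_assoc, TiT, one_mul]
  have TX1 : T * X1 = X2 * Ti := by rw [← TX1T, mul_assoc, TTi, mul_one]
  have TY2 : T * Y2 = Y1 * Ti := by rw [← TiY1Ti, ← mul_assoc, ← mul_assoc, TTi, one_mul]
  have hTX1 : T * X1 = X2 * T - (t - t⁻¹) • X2 := by rw [TX1, hTi, mul_sub]; simp
  have hTY2 : T * Y2 = Y1 * T - (t - t⁻¹) • Y1 := by rw [TY2, hTi, mul_sub]; simp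
  have hTX2 : T * X2 = X1 * T + (t - t⁻¹) • X2 := by
    conv_lhs => rw [← TX1T]
    rw [← mul_assoc, ← mul_assoc, TT]
    simp only [add_mul, one_mul, smul_mul_assoc, TX1T]
  have Y1e : Y1 = T * Y2 * T := by rw [TY2, mul_assoc, TiT, mul_one]
  have hTY1 : T * Y1 = Y2 * T + (t - t⁻¹) • Y1 := by
    conv_lhs => rw [Y1e]
    rw [← mul_assoc, ← mul_assoc, TT]
    simp only [add_mul, one_mul, smul_mul_assoc, ← Y1e]
  have TZ : T * (X1 * X2) = X1 * X2 * T := by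
    rw [← mul_assoc, hTX1, sub_mul, mul_assoc, hTX2, smul_mul_assoc, XX]
    simp only [mul_add, mul_smul_comm, mul_assoc]; simp
  have TiZ : Ti * (X1 * X2) = X1 * X2 * Ti := by
    rw [hTi]; simp only [sub_mul, mul_sub, TZ]; simp
  have TiTi : Ti * Ti = (1 + (t - t⁻¹) ^ 2) • 1 - (t - t⁻¹) • T := by
    rw [hTi]; simp only [sub_mul, mul_sub, TT]; simp; module
  have YZ2 : Y2 * (X1 * X2) = (q ^ 2) • (X1 * X2 * Y2) := by
    rw [← TiY1Ti, mul_assoc, TiZ, mul_assoc, ← mul_assoc Y1, YXX]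
    simp only [mul_smul_comm, smul_mul_assoc]
    rw [← mul_assoc Ti, ← mul_assoc Ti, TiZ]; simp only [mul_assoc]
  have q2 : q⁻¹ ^ 2 * q ^ 2 = 1 := by field_simp
  have ZY2 : X1 * X2 * Y2 = (q⁻¹ ^ 2) • (Y2 * (X1 * X2)) := by
    rw [YZ2, smul_smul, q2, one_smul]
  have eX2 : X2 = X1i * (X1 * X2) := by rw [← mul_assoc, X1iX1, one_mul]
  have X2Y2' : X2 * Y2 = (q⁻¹ ^ 2) • (Y2 * X2 * (Ti * Ti)) := by
    calc X2 * Y2 = X1i * (X1 * X2 * Y2) := by simp only [← mul_assoc, X1iX1, one_mul]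
      _ = (q⁻¹ ^ 2) • (X1i * Y2 * (X1 * X2)) := by rw [ZY2, mul_smul_comm, mul_assoc]
      _ = (q⁻¹ ^ 2) • (Y2 * X1i * (Ti * (Ti * (X1 * X2)))) := by rw [X1iY2]; simp only [mul_assoc]
      _ = (q⁻¹ ^ 2) • (Y2 * (X1i * (X1 * X2)) * (Ti * Ti)) := by
        rw [TiZ, ← mul_assoc Ti, TiZ]; simp only [mul_assoc]
      _ = _ := by rw [← eX2]
  have X2Y2 : X2 * Y2 = (q⁻¹ ^ 2) • ((1 + (t - t⁻¹) ^ 2) • (Y2 * X2) - (t - t⁻¹) • (Y2 * X2 * T)) := by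
    rw [X2Y2', TiTi]; simp only [mul_sub, mul_smul_comm, mul_one]
  have X1Y2' : X1 * Y2 = Y2 * (T * T) * X1 := by
    have h : X1i * Y2 * (T * T) = Y2 * X1i := by
      rw [X1iY2]
      calc _ = Y2 * X1i * (Ti * (Ti * T) * T) := by simp only [mul_assoc]
        _ = _ := by rw [TiT, mul_one, TiT, mul_one]
    calc X1 * Y2 = X1 * (Y2 * X1i) * X1 := by simp only [mul_assoc, X1iX1, mul_one]
      _ = (X1 * X1i) * Y2 * (T * T) * X1 := by rw [← h]; simp only [mul_assoc]
      _ = _ := by rw [X1X1i, one_mul]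
  have X1Y2 : X1 * Y2 = Y2 * X1 + (t - t⁻¹) • (Y2 * X2 * T) - (t - t⁻¹) ^ 2 • (Y2 * X2) := by
    rw [X1Y2', TT]
    simp only [mul_add, add_mul, mul_one, mul_smul_comm, smul_mul_assoc, mul_assoc, hTX1, mul_sub,
      smul_sub, smul_smul]
    module
  have X1T : X1 * T = Ti * X2 := by rw [← TX1T, mul_assoc, ← mul_assoc Ti, TiT, one_mul]
  have X1T' : X1 = Ti * X2 * Ti := by rw [← X1T, mul_assoc, TTi, mul_one]
  have X1Y1 : X1 * Y1 = (q⁻¹ ^ 2) • (Y1 * X1 + (t - t⁻¹) ^ 2 • (Y2 * X2) - (t - t⁻¹) • (Y2 * X2 * T)) := by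
    have : X1 * Y1 = (q⁻¹ ^ 2) • ((Ti * Ti) * (Y1 * X1)) := by
      calc X1 * Y1 = Ti * X2 * Ti * (T * Y2 * T) := by rw [← X1T', ← Y1e]
        _ = Ti * (X2 * ((Ti * T) * (Y2 * T))) := by simp only [mul_assoc]
        _ = Ti * (X2 * Y2) * T := by rw [TiT, one_mul]; simp only [mul_assoc]
        _ = (q⁻¹ ^ 2) • (Ti * Y2 * X2 * (Ti * (Ti * T))) := by
          rw [X2Y2']; simp only [mul_assoc, mul_smul_comm, smul_mul_assoc]
        _ = (q⁻¹ ^ 2) • (Ti * Y2 * (X2 * Ti)) := by rw [TiT, mul_one]; simp only [mul_assoc]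
        _ = _ := by rw [← TX1, ← TiY1Ti]; simp only [mul_assoc]; rw [← mul_assoc Ti T, TiT, one_mul]
    rw [this, TiTi]
    simp only [sub_mul, smul_mul_assoc, one_mul]
    rw [← mul_assoc T, hTY1]
    simp only [mul_add, add_mul, mul_one, mul_smul_comm, smul_mul_assoc, mul_assoc, hTX1, mul_sub,
      smul_sub, smul_smul, smul_add]
    module
  have X2Y1 : X2 * Y1 = Y1 * X2 + ((t - t⁻¹) * q⁻¹ ^ 2) • (Y2 * X2 * T - (t - t⁻¹) • (Y2 * X2)) := by
    have h1 : T * (X1 * Y2) * T = Y1 * X2 := by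
      rw [X1Y2]
      simp only [mul_add, add_mul, mul_sub, sub_mul, mul_smul_comm, smul_mul_assoc, mul_assoc]
      simp only [← mul_assoc T Y2, hTY2]
      simp only [mul_add, add_mul, mul_sub, sub_mul, mul_smul_comm, smul_mul_assoc, mul_assoc]
      simp only [← mul_assoc T X2, ← mul_assoc T X1, hTX2, hTX1]
      simp only [mul_add, add_mul, mul_sub, sub_mul, mul_smul_comm, smul_mul_assoc, mul_assoc, TT, mul_one]
      module
    have h2 : X2 * Y1 = T * (X1 * Y2) * T + (t - t⁻¹) • (X2 * Y2 * T) := by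
      calc X2 * Y1 = (T * X1 * T) * (T * Y2 * T) := by rw [TX1T, ← Y1e]
        _ = T * X1 * (T * T) * Y2 * T := by simp only [mul_assoc]
        _ = T * (X1 * Y2) * T + (t - t⁻¹) • ((T * X1 * T) * Y2 * T) := by
          rw [TT]; simp only [mul_add, add_mul, mul_smul_comm, smul_mul_assoc, mul_assoc, mul_one]
        _ = _ := by rw [TX1T]
    rw [h2, h1, X2Y2]
    simp only [mul_add, add_mul, mul_sub, sub_mul, mul_smul_comm, smul_mul_assoc, mul_assoc, TT, mul_one]
    module
  refine ⟨⟨TT, hTX1, hTX2, hTY1, hTY2, XX.symm, YY.symm, X1Y1, X2Y2, X1Y2, X2Y1, ?_, ?_, ?_, ?_⟩, hTi, ?_, ?_, ?_, ?_⟩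
  · rw [mul_assoc, ← mul_assoc Y1i, Y1iY1, one_mul, Y2iY2]
  · rw [mul_assoc, ← mul_assoc Y2, Y2Y2i, one_mul, Y1Y1i]
  · rw [mul_assoc, ← mul_assoc X1i, X1iX1, one_mul, X2iX2]
  · rw [mul_assoc, ← mul_assoc X2, X2X2i, one_mul, X1X1i]
  · rw [← mul_assoc, X2X2i, one_mul]
  · rw [inv_comm_aux X1X1i X1iX1 X2X2i X2iX2 XX, ← mul_assoc, X1X1i, one_mul]
  · rw [← mul_assoc, Y2Y2i, one_mul]
  · rw [inv_comm_aux Y1Y1i Y1iY1 Y2Y2i Y2iY2 YY, ← mul_assoc, Y1Y1i, one_mul]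

theorem dh_daha (hq : q ≠ 0) (ht : t ≠ 0) :
    DH q t (T q t) (X1 q t) (X2 q t) (Y1 q t) (Y2 q t) (Y2i q t * Y1i q t) (X2i q t * X1i q t) ∧
      Ti q t = T q t - (t - t⁻¹) • 1 ∧
      X1i q t = X2 q t * (X2i q t * X1i q t) ∧ X2i q t = X1 q t * (X2i q t * X1i q t) ∧
      Y1i q t = Y2 q t * (Y2i q t * Y1i q t) ∧ Y2i q t = Y1 q t * (Y2i q t * Y1i q t) := by
  have key := fun a b (h : DRel q t a b) => RingQuot.mkAlgHom_rel ℂ h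
  refine DH.mk' hq ht ?_ ?_ ?_ ?_ ?_ ?_ ?_ ?_ ?_ ?_ ?_ ?_ ?_ ?_ ?_ ?_ ?_
  · have h := key _ _ .TTi; simp only [map_mul, map_one, map_smul] at h; exact h
  · have h := key _ _ .TiT; simp only [map_mul, map_one, map_smul] at h; exact h
  · have h := key _ _ .X1X1i; simp only [map_mul, map_one, map_smul] at h; exact h
  · have h := key _ _ .X1iX1; simp only [map_mul, map_one, map_smul] at h; exact h
  · have h := key _ _ .X2X2i; simp only [map_mul, map_one, map_smul] at h; exact h
  · have h := key _ _ .X2iX2; simp only [map_mul, map_one, map_smul] at h; exact h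
  · have h := key _ _ .Y1Y1i; simp only [map_mul, map_one, map_smul] at h; exact h
  · have h := key _ _ .Y1iY1; simp only [map_mul, map_one, map_smul] at h; exact h
  · have h := key _ _ .Y2Y2i; simp only [map_mul, map_one, map_smul] at h; exact h
  · have h := key _ _ .Y2iY2; simp only [map_mul, map_one, map_smul] at h; exact h
  · have h := key _ _ .TX1T; simp only [map_mul, map_one, map_smul] at h; exact h
  · have h := key _ _ .TiY1Ti; simp only [map_mul, map_one, map_smul] at h; exact h
  · have h := key _ _ .Xcomm; simp only [map_mul, map_one, map_smul] at h; exact h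
  · have h := key _ _ .Ycomm; simp only [map_mul, map_one, map_smul] at h; exact h
  · have h := key _ _ .YXX; simp only [map_mul, map_one, map_smul] at h; exact h
  · have h := key _ _ .X1iY2; simp only [map_mul, map_one, map_smul] at h; exact h
  · have := key _ _ .hecke
    rw [map_mul, map_add, map_sub, AlgHom.commutes, AlgHom.commutes, map_zero] at this
    exact this

section Rel
variable {q t : ℂ} {A : Type*} [Ring A] [Algebra ℂ A] {T X1 X2 Y1 Y2 Wi Zi : A}

/-- tail version -/
theorem tl {a b c : A} (h : a * b = c) (z : A) : a * (b * z) = c * z := by rw [← mul_assoc, h]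

def ee (t : ℂ) (T : A) : A := ((1 + t ^ 2)⁻¹ : ℂ) • (1 + t • T)

theorem ee_mul (z : A) : ee t T * z = ((1 + t ^ 2)⁻¹ : ℂ) • (z + t • (T * z)) := by
  simp [ee, add_mul]

theorem DH.T_e (h : DH q t T X1 X2 Y1 Y2 Wi Zi) (ht : t ≠ 0) : T * ee t T = t • ee t T := by
  simp only [ee, mul_smul_comm, mul_add, h.TT, mul_one]
  match_scalars <;> field_simp
  ring

theorem DH.e_T (h : DH q t T X1 X2 Y1 Y2 Wi Zi) (ht : t ≠ 0) : ee t T * T = t • ee t T := by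
  simp only [ee, smul_mul_assoc, add_mul, h.TT, one_mul]
  match_scalars <;> field_simp
  ring

theorem DH.e_e (h : DH q t T X1 X2 Y1 Y2 Wi Zi) (ht : t ≠ 0) (ht2 : 1 + t ^ 2 ≠ 0) :
    ee t T * ee t T = ee t T := by
  rw [ee_mul, h.T_e ht]
  match_scalars
  field_simp

/-- things commuting with T -/
theorem DH.T_c1 (h : DH q t T X1 X2 Y1 Y2 Wi Zi) : T * (Y1 + Y2) = (Y1 + Y2) * T := by
  rw [mul_add, h.TY1, h.TY2, add_mul]; abel
theorem DH.T_d1 (h : DH q t T X1 X2 Y1 Y2 Wi Zi) : T * (X1 + X2) = (X1 + X2) * T := by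
  rw [mul_add, h.TX1, h.TX2, add_mul]; abel
theorem DH.T_W (h : DH q t T X1 X2 Y1 Y2 Wi Zi) : T * (Y1 * Y2) = (Y1 * Y2) * T := by
  simp only [tl h.TY1, h.TY2, add_mul, mul_sub, mul_assoc, smul_mul_assoc, mul_smul_comm]
  rw [← mul_assoc, h.YY, mul_assoc]; abel
theorem DH.T_Z (h : DH q t T X1 X2 Y1 Y2 Wi Zi) : T * (X1 * X2) = (X1 * X2) * T := by
  simp only [tl h.TX1, h.TX2, sub_mul, mul_add, mul_assoc, smul_mul_assoc, mul_smul_comm]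
  rw [← mul_assoc, h.XX, mul_assoc]; abel

theorem qcomm_inv {a b bi : A} {s s' : ℂ} (hs : s' * s = 1) (h1 : b * bi = 1) (h2 : bi * b = 1)
    (h : a * b = s • (b * a)) : a * bi = s' • (bi * a) := by
  calc a * bi = s' • s • (bi * (b * a) * bi) := by
        rw [smul_smul, hs, one_smul, ← mul_assoc, h2, one_mul]
    _ = s' • (bi * (a * b) * bi) := by rw [h]; simp
    _ = _ := by simp only [mul_assoc, h1, mul_one]

theorem DH.T_Wi (h : DH q t T X1 X2 Y1 Y2 Wi Zi) : T * Wi = Wi * T := by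
  simpa using qcomm_inv (s := 1) (s' := 1) (by simp) h.WWi h.WiW (by simpa using h.T_W)
theorem DH.T_Zi (h : DH q t T X1 X2 Y1 Y2 Wi Zi) : T * Zi = Zi * T := by
  simpa using qcomm_inv (s := 1) (s' := 1) (by simp) h.ZZi h.ZiZ (by simpa using h.T_Z)

theorem e_comm {a : A} (h : T * a = a * T) : ee t T * a = a * ee t T := by
  simp [ee, add_mul, mul_add, h]

theorem DH.X1_W (h : DH q t T X1 X2 Y1 Y2 Wi Zi) :
    X1 * (Y1 * Y2) = q⁻¹ ^ 2 • (Y1 * Y2 * X1) := by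
  have hTT := h.TT
  have a1 := h.TX1
  have a2 := h.TX2
  have a3 := h.TY1
  have a4 := h.TY2
  have b1 := h.X1Y1
  have b2 := h.X1Y2
  have b3 := h.X2Y1
  have b4 := h.X2Y2
  generalize t - t⁻¹ = k at *
  generalize q⁻¹ ^ 2 = g at *
  simp only [a1, a2, a3, a4, b1, b2, b3, b4, tl a1, tl a2, tl a3, tl a4, tl b1, tl b2, tl b3, tl b4,
    tl hTT, hTT, h.YY, tl h.YY, h.XX, tl h.XX, mul_add, add_mul, sub_mul, mul_sub, smul_mul_assoc,
    mul_smul_comm, mul_assoc, one_mul, mul_one, smul_sub, smul_add, smul_smul]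
  module

theorem DH.X2_W (h : DH q t T X1 X2 Y1 Y2 Wi Zi) :
    X2 * (Y1 * Y2) = q⁻¹ ^ 2 • (Y1 * Y2 * X2) := by
  have hTT := h.TT
  have a1 := h.TX1
  have a2 := h.TX2
  have a3 := h.TY1
  have a4 := h.TY2
  have b1 := h.X1Y1
  have b2 := h.X1Y2
  have b3 := h.X2Y1
  have b4 := h.X2Y2
  generalize t - t⁻¹ = k at *
  generalize q⁻¹ ^ 2 = g at *
  simp only [a1, a2, a3, a4, b1, b2, b3, b4, tl a1, tl a2, tl a3, tl a4, tl b1, tl b2, tl b3, tl b4,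
    tl hTT, hTT, h.YY, tl h.YY, h.XX, tl h.XX, mul_add, add_mul, sub_mul, mul_sub, smul_mul_assoc,
    mul_smul_comm, mul_assoc, one_mul, mul_one, smul_sub, smul_add, smul_smul]
  module

theorem DH.Z_Y1 (h : DH q t T X1 X2 Y1 Y2 Wi Zi) :
    X1 * X2 * Y1 = q⁻¹ ^ 2 • (Y1 * (X1 * X2)) := by
  have hTT := h.TT
  have a1 := h.TX1
  have a2 := h.TX2
  have a3 := h.TY1
  have a4 := h.TY2
  have b1 := h.X1Y1
  have b2 := h.X1Y2
  have b3 := h.X2Y1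
  have b4 := h.X2Y2
  generalize t - t⁻¹ = k at *
  generalize q⁻¹ ^ 2 = g at *
  simp only [a1, a2, a3, a4, b1, b2, b3, b4, tl a1, tl a2, tl a3, tl a4, tl b1, tl b2, tl b3, tl b4,
    tl hTT, hTT, h.YY, tl h.YY, h.XX, tl h.XX, mul_add, add_mul, sub_mul, mul_sub, smul_mul_assoc,
    mul_smul_comm, mul_assoc, one_mul, mul_one, smul_sub, smul_add, smul_smul]
  module

theorem DH.Z_Y2 (h : DH q t T X1 X2 Y1 Y2 Wi Zi) :
    X1 * X2 * Y2 = q⁻¹ ^ 2 • (Y2 * (X1 * X2)) := by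
  have hTT := h.TT
  have a1 := h.TX1
  have a2 := h.TX2
  have a3 := h.TY1
  have a4 := h.TY2
  have b1 := h.X1Y1
  have b2 := h.X1Y2
  have b3 := h.X2Y1
  have b4 := h.X2Y2
  generalize t - t⁻¹ = k at *
  generalize q⁻¹ ^ 2 = g at *
  simp only [a1, a2, a3, a4, b1, b2, b3, b4, tl a1, tl a2, tl a3, tl a4, tl b1, tl b2, tl b3, tl b4,
    tl hTT, hTT, h.YY, tl h.YY, h.XX, tl h.XX, mul_add, add_mul, sub_mul, mul_sub, smul_mul_assoc,
    mul_smul_comm, mul_assoc, one_mul, mul_one, smul_sub, smul_add, smul_smul]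
  module

/-- `e Y₂ X₂ e = e Y₁ X₁ e`, so the image of `r` is `(1+t⁻²) e Y₁ X₁ e`. -/
theorem DH.r_eq (h : DH q t T X1 X2 Y1 Y2 Wi Zi) (ht : t ≠ 0) :
    ee t T * (t⁻¹ ^ 2 • (Y1 * X1) + Y2 * X2) * ee t T =
      (1 + t⁻¹ ^ 2) • (ee t T * (Y1 * X1) * ee t T) := by
  have h1 : T * (Y2 * X2) = Y1 * X1 * T := by
    rw [tl h.TY2, sub_mul, mul_assoc, h.TX2]; simp [mul_add, mul_assoc]
  have h2 : ee t T * (Y2 * X2) * ee t T = ee t T * (Y1 * X1) * ee t T := by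
    have h3 : t • (ee t T * (Y2 * X2) * ee t T) = t • (ee t T * (Y1 * X1) * ee t T) := by
      rw [← smul_mul_assoc, ← smul_mul_assoc, ← h.e_T ht, mul_assoc _ T, h1, ← mul_smul_comm t (ee t T * _),
        ← h.T_e ht]; simp only [mul_assoc]
    simpa [smul_smul, inv_mul_cancel₀ ht] using congrArg (fun x => t⁻¹ • x) h3
  rw [mul_add, add_mul, h2]; simp only [mul_smul_comm, smul_mul_assoc]; module

end Rel

section Rel2
variable {q t : ℂ} {A : Type*} [Ring A] [Algebra ℂ A] {T X1 X2 Y1 Y2 Wi Zi : A}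

/-- normal form of `e Y₁ X₁ e`. -/
theorem DH.u_nf (h : DH q t T X1 X2 Y1 Y2 Wi Zi) (ht : t ≠ 0) :
    ee t T * (Y1 * X1) * ee t T = (1 + t ^ 2)⁻¹ • (t ^ 2 • (Y1 * (X1 * ee t T)) + Y2 * (X2 * ee t T)) := by
  have a1 := h.TX1
  have a3 := h.TY1
  have hTe := h.T_e ht
  rw [mul_assoc, ee_mul]
  generalize ee t T = e at *
  simp only [a1, a3, tl a1, tl a3, hTe, mul_add, add_mul, sub_mul, mul_sub, smul_mul_assoc,
    mul_smul_comm, mul_assoc, one_mul, mul_one, smul_sub, smul_add, smul_smul]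
  match_scalars <;> field_simp
  all_goals ring

theorem DH.L1 (h : DH q t T X1 X2 Y1 Y2 Wi Zi) (ht : t ≠ 0) (ht2 : 1 + t ^ 2 ≠ 0) :
    (X1 + X2) * ((Y1 + Y2) * ee t T) = (Y1 + Y2) * ((X1 + X2) * ee t T)
      + (q⁻¹ ^ 2 - 1) • (1 + t⁻¹ ^ 2) • (ee t T * (Y1 * X1) * ee t T) := by
  have b1 := h.X1Y1
  have b2 := h.X1Y2
  have b3 := h.X2Y1
  have b4 := h.X2Y2
  have hTe := h.T_e ht
  rw [h.u_nf ht]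
  generalize ee t T = e at *
  generalize q⁻¹ ^ 2 = g at *
  simp only [hTe, tl b1, tl b2, tl b3, tl b4, mul_add, add_mul, sub_mul, mul_sub, smul_mul_assoc,
    mul_smul_comm, mul_assoc, one_mul, mul_one, smul_sub, smul_add, smul_smul]
  match_scalars <;> field_simp
  all_goals ring

theorem DH.L2 (h : DH q t T X1 X2 Y1 Y2 Wi Zi) (hq : q ≠ 0) (ht : t ≠ 0) (ht2 : 1 + t ^ 2 ≠ 0) :
    (X1 + X2) * ((1 + t⁻¹ ^ 2) • (ee t T * (Y1 * X1) * ee t T)) =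
      q⁻¹ ^ 2 • (1 + t⁻¹ ^ 2) • (ee t T * (Y1 * X1) * ee t T * (X1 + X2))
      + ((1 - q⁻¹ ^ 2) * q⁻¹ ^ 2) • ((Y1 + Y2) * (q ^ 2 • (X1 * X2 * ee t T))) := by
  have a1 := h.TX1
  have a2 := h.TX2
  have b1 := h.X1Y1
  have b2 := h.X1Y2
  have b3 := h.X2Y1
  have b4 := h.X2Y2
  have hTe := h.T_e ht
  have hc := e_comm (t := t) h.T_d1
  rw [h.u_nf ht]
  generalize ee t T = e at *
  have hg : q ^ 2 = (q⁻¹ ^ 2)⁻¹ := by simp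
  have hg0 : q⁻¹ ^ 2 ≠ 0 := by positivity
  rw [hg]
  generalize q⁻¹ ^ 2 = g at *
  simp only [smul_mul_assoc, add_mul _ _ (X1 + X2), mul_assoc, hc]
  simp only [hTe, a1, a2, tl a1, tl a2, h.XX, tl h.XX, b1, b2, b3, b4,
    tl b1, tl b2, tl b3, tl b4, mul_add, add_mul, sub_mul, mul_sub, smul_mul_assoc,
    mul_smul_comm, mul_assoc, one_mul, mul_one, smul_sub, smul_add, smul_smul]
  match_scalars <;> field_simp
  all_goals ring

theorem DH.L3 (h : DH q t T X1 X2 Y1 Y2 Wi Zi) (hq : q ≠ 0) (ht : t ≠ 0) (ht2 : 1 + t ^ 2 ≠ 0) :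
    (1 + t⁻¹ ^ 2) • (ee t T * (Y1 * X1) * ee t T * (Y1 + Y2)) =
      q⁻¹ ^ 2 • ((Y1 + Y2) * ((1 + t⁻¹ ^ 2) • (ee t T * (Y1 * X1) * ee t T)))
      + ((1 - q⁻¹ ^ 2) * q⁻¹ ^ 2) • (q ^ 2 • (Y1 * Y2 * ((X1 + X2) * ee t T))) := by
  have a1 := h.TX1
  have a2 := h.TX2
  have a3 := h.TY1
  have a4 := h.TY2
  have b1 := h.X1Y1
  have b2 := h.X1Y2
  have b3 := h.X2Y1
  have b4 := h.X2Y2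
  have hTe := h.T_e ht
  have hc := e_comm (t := t) h.T_c1
  rw [h.u_nf ht]
  generalize ee t T = e at *
  have hg : q ^ 2 = (q⁻¹ ^ 2)⁻¹ := by simp
  have hg0 : q⁻¹ ^ 2 ≠ 0 := by positivity
  rw [hg]
  generalize q⁻¹ ^ 2 = g at *
  simp only [smul_mul_assoc, add_mul _ _ (Y1 + Y2), mul_assoc, hc]
  simp only [hTe, a1, a2, tl a1, tl a2, h.XX, tl h.XX, h.YY, tl h.YY, tl a3, tl a4, b1, b2, b3, b4,
    tl b1, tl b2, tl b3, tl b4, mul_add, add_mul, sub_mul, mul_sub, smul_mul_assoc,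
    mul_smul_comm, mul_assoc, one_mul, mul_one, smul_sub, smul_add, smul_smul]
  match_scalars <;> field_simp
  all_goals ring

set_option maxHeartbeats 1600000 in
theorem DH.L4 (h : DH q t T X1 X2 Y1 Y2 Wi Zi) (hq : q ≠ 0) (ht : t ≠ 0) (ht2 : 1 + t ^ 2 ≠ 0) :
    ((1 + t⁻¹ ^ 2) • (ee t T * (Y1 * X1) * ee t T)) * ((1 + t⁻¹ ^ 2) • (ee t T * (Y1 * X1) * ee t T)) =
      (q⁻¹ ^ 4 * (1 + t ^ 2) * (q⁻¹ ^ 2 + t⁻¹ ^ 2)) • (q ^ 2 • (Y1 * Y2 * (q ^ 2 • (X1 * X2 * ee t T))))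
        - (q⁻¹ ^ 4) • (q ^ 2 • (Y1 * Y2 * ((X1 + X2) * ((X1 + X2) * ee t T))))
        - (q⁻¹ ^ 4) • ((Y1 + Y2) * ((Y1 + Y2) * (q ^ 2 • (X1 * X2 * ee t T))))
        + (q⁻¹ ^ 2) • ((Y1 + Y2) * ((1 + t⁻¹ ^ 2) • (ee t T * (Y1 * X1) * ee t T * (X1 + X2)))) := by
  have a1 := h.TX1
  have a2 := h.TX2
  have a3 := h.TY1
  have a4 := h.TY2
  have b1 := h.X1Y1
  have b2 := h.X1Y2
  have b3 := h.X2Y1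
  have b4 := h.X2Y2
  have hTe := h.T_e ht
  have hc := e_comm (t := t) h.T_d1
  have hh := ee_mul (t := t) (T := T)
  rw [h.u_nf ht]
  generalize ee t T = e at *
  have hg : q ^ 2 = (q⁻¹ ^ 2)⁻¹ := by simp
  have hg4 : q⁻¹ ^ 4 = (q⁻¹ ^ 2) ^ 2 := by ring
  have hg0 : q⁻¹ ^ 2 ≠ 0 := by positivity
  rw [hg, hg4]
  generalize q⁻¹ ^ 2 = g at *
  simp only [smul_mul_assoc, add_mul _ _ (X1 + X2), mul_assoc, hc]
  simp only [hTe, hh, a1, a2, tl a1, tl a2, h.XX, tl h.XX, h.YY, tl h.YY, tl a3, tl a4, b1, b2, b3, b4,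
    tl b1, tl b2, tl b3, tl b4, mul_add, add_mul, sub_mul, mul_sub, smul_mul_assoc,
    mul_smul_comm, mul_assoc, one_mul, mul_one, smul_sub, smul_add, smul_smul]
  match_scalars <;> field_simp
  all_goals ring
end Rel2

section Phi
variable {q t : ℂ} {A : Type*} [Ring A] [Algebra ℂ A]

structure BR (q t : ℂ) (e : A) (v : BGen → A) : Prop where
  idem : e * e = e
  l : ∀ g, e * v g = v g
  rt : ∀ g, v g * e = v g
  c2c2i : v .c2 * v .c2i = e
  c2ic2 : v .c2i * v .c2 = e
  d2d2i : v .d2 * v .d2i = e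
  d2id2 : v .d2i * v .d2 = e
  c2c1 : v .c2 * v .c1 = v .c1 * v .c2
  d2d1 : v .d2 * v .d1 = v .d1 * v .d2
  d2c2 : v .d2 * v .c2 = (q⁻¹ ^ 4) • (v .c2 * v .d2)
  d2c1 : v .d2 * v .c1 = (q⁻¹ ^ 2) • (v .c1 * v .d2)
  d1c2 : v .d1 * v .c2 = (q⁻¹ ^ 2) • (v .c2 * v .d1)
  d1c1 : v .d1 * v .c1 = v .c1 * v .d1 + (q⁻¹ ^ 2 - 1) • v .r
  d2r : v .d2 * v .r = (q⁻¹ ^ 2) • (v .r * v .d2)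
  rc2 : v .r * v .c2 = (q⁻¹ ^ 2) • (v .c2 * v .r)
  d1r : v .d1 * v .r =
      (q⁻¹ ^ 2) • (v .r * v .d1) + ((1 - q⁻¹ ^ 2) * q⁻¹ ^ 2) • (v .c1 * v .d2)
  rc1 : v .r * v .c1 =
      (q⁻¹ ^ 2) • (v .c1 * v .r) + ((1 - q⁻¹ ^ 2) * q⁻¹ ^ 2) • (v .c2 * v .d1)
  rr : v .r * v .r =
      (q⁻¹ ^ 4 * (1 + t ^ 2) * (q⁻¹ ^ 2 + t⁻¹ ^ 2)) • (v .c2 * v .d2)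
        - (q⁻¹ ^ 4) • (v .c2 * v .d1 * v .d1)
        - (q⁻¹ ^ 4) • (v .c1 * v .c1 * v .d2)
        + (q⁻¹ ^ 2) • (v .c1 * v .r * v .d1)

abbrev mkB (q t : ℂ) : FB →ₐ[ℂ] AlgBt q t := RingQuot.mkAlgHom ℂ (BRel q t)

def leftM (e : A) : Submodule ℂ A where
  carrier := {z | e * z = z}
  add_mem' := by intro a b ha hb; simp_all [mul_add]
  zero_mem' := by simp
  smul_mem' := by intro c x hx; simp_all

theorem AlgBt.ind {S : Subalgebra ℂ (AlgBt q t)} (h : ∀ g, mkB q t (gB g) ∈ S) (x : AlgBt q t) :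
    x ∈ S := by
  obtain ⟨y, rfl⟩ := RingQuot.mkAlgHom_surjective ℂ (BRel q t) x
  induction y using FreeAlgebra.induction with
  | grade0 r => rw [AlgHom.commutes]; exact S.algebraMap_mem r
  | grade1 g => exact h g
  | mul a b ha hb => rw [map_mul]; exact S.mul_mem ha hb
  | add a b ha hb => rw [map_add]; exact S.add_mem ha hb

theorem BR.exists_phi {e : A} {v : BGen → A} (h : BR q t e v) :
    ∃ Φ : AlgBt q t →ₗ[ℂ] A, (∀ x y, Φ (x * y) = Φ x * Φ y) ∧ Φ 1 = e ∧
      ∀ g, Φ (mkB q t (gB g)) = v g := by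
  let L : BGen → Module.End ℂ (leftM e) := fun g =>
    (LinearMap.mulLeft ℂ (v g)).restrict (fun z _ => by
      show e * (v g * z) = v g * z
      rw [← mul_assoc, h.l])
  have hL : ∀ g z, ((L g z : leftM e) : A) = v g * z := fun g z => rfl
  let f := FreeAlgebra.lift ℂ L
  have hf : ∀ g, f (gB g) = L g := fun g => by simp [f, gB]
  have hz : ∀ z : leftM e, e * (z : A) = z := fun z => z.2
  have hrel : ∀ ⦃a b : FB⦄, BRel q t a b → f a = f b := by
    intro a b hab
    ext z
    cases hab <;>
    simp only [map_mul, map_one, map_add, map_sub, map_smul, hf, Module.End.mul_apply, Module.End.one_apply,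
      LinearMap.add_apply, LinearMap.sub_apply, LinearMap.smul_apply, Submodule.coe_add, Submodule.coe_sub,
      Submodule.coe_smul, hL]
    case c2c2i => rw [tl h.c2c2i, hz]
    case c2ic2 => rw [tl h.c2ic2, hz]
    case d2d2i => rw [tl h.d2d2i, hz]
    case d2id2 => rw [tl h.d2id2, hz]
    case c2c1 => rw [tl h.c2c1, mul_assoc]
    case d2d1 => rw [tl h.d2d1, mul_assoc]
    case d2c2 => rw [tl h.d2c2, smul_mul_assoc, mul_assoc]
    case d2c1 => rw [tl h.d2c1, smul_mul_assoc, mul_assoc]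
    case d1c2 => rw [tl h.d1c2, smul_mul_assoc, mul_assoc]
    case d2r => rw [tl h.d2r, smul_mul_assoc, mul_assoc]
    case rc2 => rw [tl h.rc2, smul_mul_assoc, mul_assoc]
    case d1c1 => rw [tl h.d1c1]; simp only [add_mul, smul_mul_assoc, mul_assoc]
    case d1r => rw [tl h.d1r]; simp only [add_mul, smul_mul_assoc, mul_assoc]
    case rc1 => rw [tl h.rc1]; simp only [add_mul, smul_mul_assoc, mul_assoc]
    case rr => rw [tl h.rr]; simp only [add_mul, sub_mul, smul_mul_assoc, mul_assoc]
  let ρ : AlgBt q t →ₐ[ℂ] Module.End ℂ (leftM e) := RingQuot.liftAlgHom ℂ ⟨f, hrel⟩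
  have hρ : ∀ g, ρ (mkB q t (gB g)) = L g := fun g => by
    rw [← hf]; exact RingQuot.liftAlgHom_mkAlgHom_apply ℂ f hrel (gB g)
  let e' : leftM e := ⟨e, h.idem⟩
  have key : ∀ x (z : leftM e), ((ρ x z : leftM e) : A) = (ρ x e' : A) * z := by
    let S : Subalgebra ℂ (AlgBt q t) :=
      { carrier := {x | ∀ z : leftM e, ((ρ x z : leftM e) : A) = (ρ x e' : A) * z}
        mul_mem' := by
          intro a b ha hb z
          simp only [map_mul, Module.End.mul_apply]
          rw [ha (ρ b z), ha (ρ b e'), hb z, mul_assoc]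
        add_mem' := by
          intro a b ha hb z
          simp only [map_add, LinearMap.add_apply, Submodule.coe_add]
          rw [ha z, hb z, add_mul]
        algebraMap_mem' := by
          intro c z
          simp [Algebra.algebraMap_eq_smul_one, e', hz] }
    intro x
    refine AlgBt.ind (S := S) ?_ x
    intro g z
    simp [hρ, hL, e', h.rt]
  refine ⟨(leftM e).subtype ∘ₗ (LinearMap.applyₗ e') ∘ₗ ρ.toLinearMap, ?_, ?_, ?_⟩
  · intro x y
    simp [← key]
  · simp [e']
  · intro g
    simp [hρ, hL, e', h.rt]

end Phi

section Phi2
variable {q t : ℂ} {A : Type*} [Ring A] [Algebra ℂ A] {T X1 X2 Y1 Y2 Wi Zi : A}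

def vH (q t : ℂ) (T X1 X2 Y1 Y2 Wi Zi : A) : BGen → A
  | .c1 => (Y1 + Y2) * ee t T
  | .c2 => q ^ 2 • (Y1 * Y2 * ee t T)
  | .c2i => q⁻¹ ^ 2 • (Wi * ee t T)
  | .d1 => (X1 + X2) * ee t T
  | .d2 => q ^ 2 • (X1 * X2 * ee t T)
  | .d2i => q⁻¹ ^ 2 • (Zi * ee t T)
  | .r => (1 + t⁻¹ ^ 2) • (ee t T * (Y1 * X1) * ee t T)

theorem DH.br (h : DH q t T X1 X2 Y1 Y2 Wi Zi) (hq : q ≠ 0) (ht : t ≠ 0) (ht2 : 1 + t ^ 2 ≠ 0) :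
    BR q t (ee t T) (vH q t T X1 X2 Y1 Y2 Wi Zi) := by
  have i := h.e_e ht ht2
  have a1 := e_comm (t := t) h.T_c1
  have a2 := e_comm (t := t) h.T_W
  have a3 := e_comm (t := t) h.T_Wi
  have a4 := e_comm (t := t) h.T_d1
  have a5 := e_comm (t := t) h.T_Z
  have a6 := e_comm (t := t) h.T_Zi
  have L1 := h.L1 ht ht2
  have L2 := h.L2 hq ht ht2
  have L3 := h.L3 hq ht ht2
  have L4 := h.L4 hq ht ht2
  have hqq : q⁻¹ ^ 2 * q ^ 2 = 1 := by field_simp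
  have hqq' : q ^ 2 * q⁻¹ ^ 2 = 1 := by field_simp
  have WiW := h.WiW
  have WWi := h.WWi
  have ZiZ := h.ZiZ
  have ZZi := h.ZZi
  have m1 : Y1 * Y2 * (Y1 + Y2) = (Y1 + Y2) * (Y1 * Y2) := by
    simp only [mul_add, add_mul, mul_assoc, h.YY, tl h.YY]
  have m2 : X1 * X2 * (X1 + X2) = (X1 + X2) * (X1 * X2) := by
    simp only [mul_add, add_mul, mul_assoc, h.XX, tl h.XX]
  have m3 : X1 * X2 * (Y1 + Y2) = q⁻¹ ^ 2 • ((Y1 + Y2) * (X1 * X2)) := by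
    rw [mul_add, h.Z_Y1, h.Z_Y2, add_mul, smul_add]
  have m4 : (X1 + X2) * (Y1 * Y2) = q⁻¹ ^ 2 • (Y1 * Y2 * (X1 + X2)) := by
    rw [add_mul, h.X1_W, h.X2_W, mul_add, smul_add]
  have m5 : X1 * X2 * (Y1 * Y2) = q⁻¹ ^ 4 • (Y1 * Y2 * (X1 * X2)) := by
    rw [mul_assoc X1, h.X2_W, mul_smul_comm, tl h.X1_W, smul_mul_assoc, smul_smul, mul_assoc (Y1 * Y2)]
    congr 1; ring
  have m6 : X1 * X2 * (Y1 * X1) = q⁻¹ ^ 2 • (Y1 * X1 * (X1 * X2)) := by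
    rw [tl h.Z_Y1, smul_mul_assoc]; simp only [mul_assoc, h.XX, tl h.XX]
  have m7 : Y1 * X1 * (Y1 * Y2) = q⁻¹ ^ 2 • (Y1 * Y2 * (Y1 * X1)) := by
    rw [mul_assoc Y1 X1, h.X1_W, mul_smul_comm]; simp only [mul_assoc, h.YY, tl h.YY]
  generalize hC : Y1 + Y2 = C at *
  generalize hD : X1 + X2 = D at *
  generalize hW : Y1 * Y2 = W at *
  generalize hZ : X1 * X2 = Z at *
  generalize hU : Y1 * X1 = U at *
  generalize hE : ee t T = e at *
  constructor
  case idem => exact i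
  case l =>
    intro g
    cases g <;> simp only [vH, hC, hD, hW, hZ, hU, hE, mul_smul_comm, ← mul_assoc, i] <;>
      simp only [a1, a2, a3, a4, a5, a6, mul_assoc, i]
  case rt =>
    intro g
    cases g <;> simp only [vH, hC, hD, hW, hZ, hU, hE, smul_mul_assoc, mul_assoc, i]
  all_goals
    simp only [vH, hC, hD, hW, hZ, hU, hE, smul_mul_assoc, mul_smul_comm, smul_smul]
  case c2c2i => rw [mul_assoc, tl a3, mul_assoc, i, tl WWi, hqq, one_smul, one_mul]
  case c2ic2 => rw [mul_assoc, tl a2, mul_assoc, i, tl WiW, hqq', one_smul, one_mul]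
  case d2d2i => rw [mul_assoc, tl a6, mul_assoc, i, tl ZZi, hqq, one_smul, one_mul]
  case d2id2 => rw [mul_assoc, tl a5, mul_assoc, i, tl ZiZ, hqq', one_smul, one_mul]
  case c2c1 => simp only [mul_assoc, tl a1, tl a2, i, tl m1]
  case d2d1 => simp only [mul_assoc, tl a4, tl a5, i, tl m2]
  case d2c2 => simp only [mul_assoc, tl a2, tl a5, i, tl m5, smul_mul_assoc, smul_smul]; congr 1; ring
  case d2c1 => simp only [mul_assoc, tl a1, tl a5, i, tl m3, smul_mul_assoc, smul_smul]; congr 1; ring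
  case d1c2 => simp only [mul_assoc, tl a2, tl a4, i, tl m4, smul_mul_assoc, smul_smul]; congr 1; ring
  case d2r =>
    have k1 : Z * e * (e * U * e) = q⁻¹ ^ 2 • (e * (U * (Z * e))) := by
      rw [mul_assoc, mul_assoc e U, tl i, ← mul_assoc Z e, ← a5, mul_assoc e Z, tl m6]
      simp only [smul_mul_assoc, mul_smul_comm, mul_assoc, a5]
    have k2 : e * U * e * (Z * e) = e * (U * (Z * e)) := by
      simp only [mul_assoc, tl a5, i]
    rw [k1, k2, smul_smul]; congr 1; ring
  case rc2 =>
    simp only [mul_assoc, tl i, tl a2, i]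
    rw [tl m7]; simp only [ tl a2, mul_assoc, a2, smul_mul_assoc, mul_smul_comm, smul_smul]; congr 1; ring
  case d1c1 => simp only [mul_assoc, tl a1, tl a4, i, smul_smul] at L1 ⊢; rw [L1]
  case d1r =>
    simp only [mul_assoc, tl a1, tl a4, a4, tl a5, tl i, i, smul_smul, smul_mul_assoc, mul_smul_comm] at L2 ⊢
    rw [L2]
  case rc1 =>
    simp only [mul_assoc, tl a1, a1, tl a4, a4, tl a5, tl i, i, smul_smul, smul_mul_assoc, mul_smul_comm] at L3 ⊢
    rw [L3]
  case rr =>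
    simp only [mul_assoc, tl a1, a1, tl a4, a4, tl a5, tl i, i, smul_smul, smul_mul_assoc, mul_smul_comm] at L4 ⊢
    rw [L4]

end Phi2

section Surj
variable {q t : ℂ} {A : Type*} [Ring A] [Algebra ℂ A] {T X1 X2 Y1 Y2 Wi Zi : A}

inductive InD (e D Z Zi : A) : A → Prop
  | base : InD e D Z Zi e
  | zero : InD e D Z Zi 0
  | add {x y} : InD e D Z Zi x → InD e D Z Zi y → InD e D Z Zi (x + y)
  | smul (c : ℂ) {x} : InD e D Z Zi x → InD e D Z Zi (c • x)
  | d {x} : InD e D Z Zi x → InD e D Z Zi (D * x)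
  | z {x} : InD e D Z Zi x → InD e D Z Zi (Z * x)
  | zi {x} : InD e D Z Zi x → InD e D Z Zi (Zi * x)

inductive InV (S : A → Prop) (Y1 Y2 Wi : A) : A → Prop
  | base {x} : S x → InV S Y1 Y2 Wi x
  | add {x y} : InV S Y1 Y2 Wi x → InV S Y1 Y2 Wi y → InV S Y1 Y2 Wi (x + y)
  | smul (c : ℂ) {x} : InV S Y1 Y2 Wi x → InV S Y1 Y2 Wi (c • x)
  | y1 {x} : InV S Y1 Y2 Wi x → InV S Y1 Y2 Wi (Y1 * x)
  | y2 {x} : InV S Y1 Y2 Wi x → InV S Y1 Y2 Wi (Y2 * x)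
  | wi {x} : InV S Y1 Y2 Wi x → InV S Y1 Y2 Wi (Wi * x)

theorem InV.sub {S : A → Prop} {x y : A} (h1 : InV S Y1 Y2 Wi x) (h2 : InV S Y1 Y2 Wi y) :
    InV S Y1 Y2 Wi (x - y) := by
  have := h1.add (h2.smul (-1)); simpa [sub_eq_add_neg] using this

def InV0 (e D Z Zi X1 : A) (x : A) : Prop :=
  ∃ a b, InD e D Z Zi a ∧ InD e D Z Zi b ∧ x = a + X1 * b

theorem InD.sub {e D Z Zi x y : A} (h1 : InD e D Z Zi x) (h2 : InD e D Z Zi y) :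
    InD e D Z Zi (x - y) := by
  have := h1.add (h2.smul (-1)); simpa [sub_eq_add_neg] using this

theorem DH.surj (h : DH q t T X1 X2 Y1 Y2 Wi Zi) (hq : q ≠ 0) (ht : t ≠ 0) (ht2 : 1 + t ^ 2 ≠ 0)
    (hgen : ∀ S : Subalgebra ℂ A, T ∈ S → X1 ∈ S → X2 ∈ S → Y1 ∈ S → Y2 ∈ S → Wi ∈ S → Zi ∈ S →
      ∀ x, x ∈ S)
    (R : Submodule ℂ A) (hR1 : ee t T ∈ R) (hRm : ∀ x ∈ R, ∀ y ∈ R, x * y ∈ R)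
    (hRv : ∀ g, vH q t T X1 X2 Y1 Y2 Wi Zi g ∈ R) (y : A) : ee t T * y * ee t T ∈ R := by
  have i := h.e_e ht ht2
  have a1 := e_comm (t := t) h.T_c1
  have a2 := e_comm (t := t) h.T_W
  have a3 := e_comm (t := t) h.T_Wi
  have a4 := e_comm (t := t) h.T_d1
  have a5 := e_comm (t := t) h.T_Z
  have a6 := e_comm (t := t) h.T_Zi
  have hTe := h.T_e ht
  have hq2 : q ^ 2 ≠ 0 := pow_ne_zero 2 hq
  have hqi2 : q⁻¹ ^ 2 ≠ 0 := pow_ne_zero 2 (inv_ne_zero hq)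
  have eX : ee t T * X1 * ee t T = (1 + t ^ 2)⁻¹ • ((X1 + X2) * ee t T) := by
    rw [mul_assoc, ee_mul, tl h.TX1, sub_mul, mul_assoc, hTe]
    simp only [add_mul, smul_mul_assoc, mul_smul_comm]
    match_scalars <;> field_simp
    ring
  have eY : ee t T * Y1 * ee t T = (t ^ 2 * (1 + t ^ 2)⁻¹) • ((Y1 + Y2) * ee t T) := by
    rw [mul_assoc, ee_mul, tl h.TY1, add_mul, mul_assoc, hTe]
    simp only [add_mul, smul_mul_assoc, mul_smul_comm]
    match_scalars <;> field_simp
    ring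
  have rC : (Y1 + Y2) * ee t T ∈ R := hRv .c1
  have rD : (X1 + X2) * ee t T ∈ R := hRv .d1
  have rW : Y1 * Y2 * ee t T ∈ R := (R.smul_mem_iff hq2).1 (hRv .c2)
  have rZ : X1 * X2 * ee t T ∈ R := (R.smul_mem_iff hq2).1 (hRv .d2)
  have rWi : Wi * ee t T ∈ R := (R.smul_mem_iff hqi2).1 (hRv .c2i)
  have rZi : Zi * ee t T ∈ R := (R.smul_mem_iff hqi2).1 (hRv .d2i)
  have ht3 : 1 + t⁻¹ ^ 2 ≠ 0 := by
    have : 1 + t⁻¹ ^ 2 = (1 + t ^ 2) * t⁻¹ ^ 2 := by field_simp; ring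
    rw [this]; exact mul_ne_zero ht2 (pow_ne_zero 2 (inv_ne_zero ht))
  have rU : ee t T * (Y1 * X1) * ee t T ∈ R := (R.smul_mem_iff ht3).1 (hRv .r)
  have rX : ee t T * X1 * ee t T ∈ R := by rw [eX]; exact R.smul_mem _ rD
  have rY : ee t T * Y1 * ee t T ∈ R := by rw [eY]; exact R.smul_mem _ rC
  set e := ee t T with he
  set D := X1 + X2 with hD
  set C := Y1 + Y2 with hC
  set Z := X1 * X2 with hZ
  set W := Y1 * Y2 with hW
  have D1 : ∀ x, InD e D Z Zi x → e * x = x ∧ x ∈ R ∧ T * x = t • x := by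
    intro x hx
    induction hx with
    | base => exact ⟨i, hR1, hTe⟩
    | zero => simp
    | add _ _ h1 h2 =>
      exact ⟨by rw [mul_add, h1.1, h2.1], R.add_mem h1.2.1 h2.2.1, by rw [mul_add, h1.2.2, h2.2.2, smul_add]⟩
    | smul c _ h1 =>
      exact ⟨by rw [mul_smul_comm, h1.1], R.smul_mem c h1.2.1, by rw [mul_smul_comm, h1.2.2, smul_comm]⟩
    | d _ h1 =>
      refine ⟨by rw [tl a4, mul_assoc, h1.1], ?_, by rw [tl h.T_d1, mul_assoc, h1.2.2, mul_smul_comm]⟩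
      rw [← h1.1, ← mul_assoc]; exact hRm _ rD _ h1.2.1
    | z _ h1 =>
      refine ⟨by rw [tl a5, mul_assoc, h1.1], ?_, by rw [tl h.T_Z, mul_assoc, h1.2.2, mul_smul_comm]⟩
      rw [← h1.1, ← mul_assoc]; exact hRm _ rZ _ h1.2.1
    | zi _ h1 =>
      refine ⟨by rw [tl a6, mul_assoc, h1.1], ?_, by rw [tl h.T_Zi, mul_assoc, h1.2.2, mul_smul_comm]⟩
      rw [← h1.1, ← mul_assoc]; exact hRm _ rZi _ h1.2.1
  have X1D : X1 * D = D * X1 := by simp only [hD, mul_add, add_mul, h.XX]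
  have X1Z : X1 * Z = Z * X1 := by simp only [hZ, mul_assoc, h.XX]
  have X1X1 : X1 * X1 = X1 * D - Z := by simp only [hD, hZ, mul_add]; abel
  have X2e : X2 = D - X1 := by simp [hD]
  have X1Zi : X1 * Zi = Zi * X1 := by
    simpa using qcomm_inv (s := 1) (s' := 1) (by simp) h.ZZi h.ZiZ (by simpa using X1Z)
  -- V0
  have V0X1 : ∀ x, InV0 e D Z Zi X1 x → InV0 e D Z Zi X1 (X1 * x) := by
    rintro _ ⟨a, b, ha, hb, rfl⟩
    refine ⟨(-1 : ℂ) • (Z * b), a + D * b, hb.z.smul _, ha.add hb.d, ?_⟩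
    rw [mul_add, tl X1X1, sub_mul]; simp only [hD, neg_smul, one_smul, mul_add, add_mul, mul_assoc]; abel
  have V0X2 : ∀ x, InV0 e D Z Zi X1 x → InV0 e D Z Zi X1 (X2 * x) := by
    rintro _ ⟨a, b, ha, hb, rfl⟩
    refine ⟨D * a + Z * b, (-1 : ℂ) • a, ha.d.add hb.z, ha.smul _, ?_⟩
    rw [mul_add, tl h.XX]
    simp only [hD, neg_smul, one_smul, mul_neg, add_mul]; abel
  have V0T : ∀ x, InV0 e D Z Zi X1 x → InV0 e D Z Zi X1 (T * x) := by
    rintro _ ⟨a, b, ha, hb, rfl⟩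
    refine ⟨t • a + t⁻¹ • (D * b), -(t⁻¹) • b, (ha.smul _).add (hb.d.smul _), hb.smul _, ?_⟩
    rw [mul_add, tl h.TX1, sub_mul, mul_assoc, (D1 a ha).2.2, (D1 b hb).2.2, hD]
    simp only [smul_mul_assoc, mul_smul_comm, add_mul]
    module
  have V0Zi : ∀ x, InV0 e D Z Zi X1 x → InV0 e D Z Zi X1 (Zi * x) := by
    rintro _ ⟨a, b, ha, hb, rfl⟩
    refine ⟨Zi * a, Zi * b, ha.zi, hb.zi, ?_⟩
    rw [mul_add, tl X1Zi, mul_assoc]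
  set P := InV0 e D Z Zi X1 with hP
  have VT : ∀ x, InV P Y1 Y2 Wi x → InV P Y1 Y2 Wi (T * x) := by
    intro x hx
    induction hx with
    | base hx => exact .base (V0T _ hx)
    | add _ _ h1 h2 => rw [mul_add]; exact h1.add h2
    | smul c _ h1 => rw [mul_smul_comm]; exact h1.smul c
    | y1 hx h1 =>
      rw [tl h.TY1, add_mul, mul_assoc, smul_mul_assoc]
      exact h1.y2.add (hx.y1.smul _)
    | y2 hx h1 =>
      rw [tl h.TY2, sub_mul, mul_assoc, smul_mul_assoc]
      exact h1.y1.sub (hx.y1.smul _)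
    | wi hx h1 => rw [tl h.T_Wi, mul_assoc]; exact h1.wi
  have YXT : Y2 * X2 * T = T * (Y1 * X1) + (t - t⁻¹) • (Y2 * X2) - (t - t⁻¹) • (Y1 * X1) := by
    rw [tl h.TY1, add_mul]; simp only [h.TX1, mul_sub, mul_smul_comm, smul_mul_assoc, mul_assoc]
    abel
  have hqq : q ^ 2 * q⁻¹ ^ 2 = 1 := by field_simp
  have X1Wi := qcomm_inv hqq h.WWi h.WiW h.X1_W
  have X2Wi := qcomm_inv hqq h.WWi h.WiW h.X2_W
  have VX : ∀ x, InV P Y1 Y2 Wi x → InV P Y1 Y2 Wi (X1 * x) ∧ InV P Y1 Y2 Wi (X2 * x) := by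
    intro x hx
    induction hx with
    | base hx => exact ⟨.base (V0X1 _ hx), .base (V0X2 _ hx)⟩
    | add _ _ h1 h2 => rw [mul_add, mul_add]; exact ⟨h1.1.add h2.1, h1.2.add h2.2⟩
    | smul c _ h1 => rw [mul_smul_comm, mul_smul_comm]; exact ⟨h1.1.smul c, h1.2.smul c⟩
    | @y1 x hx h1 =>
      rw [tl h.X1Y1, tl h.X2Y1, YXT]
      have k1 := h1.1.y1
      have k2 := h1.2.y2
      have k3 := h1.2.y1
      have k4 := VT _ k1
      simp only [add_mul, sub_mul, smul_mul_assoc, mul_assoc]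
      exact ⟨((k1.add (k2.smul _)).sub (((k4.add (k2.smul _)).sub (k1.smul _)).smul _)).smul _,
        k3.add ((((k4.add (k2.smul _)).sub (k1.smul _)).sub (k2.smul _)).smul _)⟩
    | @y2 x hx h1 =>
      rw [tl h.X1Y2, tl h.X2Y2, YXT]
      have k1 := h1.1.y1
      have k2 := h1.2.y2
      have k3 := h1.1.y2
      have k4 := VT _ k1
      simp only [add_mul, sub_mul, smul_mul_assoc, mul_assoc]
      exact ⟨(k3.add (((k4.add (k2.smul _)).sub (k1.smul _)).smul _)).sub (k2.smul _),
        ((k2.smul _).sub (((k4.add (k2.smul _)).sub (k1.smul _)).smul _)).smul _⟩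
    | wi hx h1 =>
      rw [tl X1Wi, tl X2Wi, smul_mul_assoc, smul_mul_assoc, mul_assoc, mul_assoc]
      exact ⟨h1.1.wi.smul _, h1.2.wi.smul _⟩
  have hgg : q⁻¹ ^ 2 * q ^ 2 = 1 := by field_simp
  have YZ : ∀ {Y : A}, Z * Y = q⁻¹ ^ 2 • (Y * Z) → Zi * Y = q ^ 2 • (Y * Zi) := by
    intro Y hY
    have : Y * Z = q ^ 2 • (Z * Y) := by rw [hY, smul_smul, hqq, one_smul]
    have := qcomm_inv hgg h.ZZi h.ZiZ this
    rw [this, smul_smul, hqq, one_smul]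
  have Y1Zi := YZ h.Z_Y1
  have Y2Zi := YZ h.Z_Y2
  have WiZi : Zi * Wi = (q⁻¹ ^ 4) • (Wi * Zi) := by
    refine qcomm_inv (s := q ^ 4) (by field_simp) h.WWi h.WiW ?_
    rw [tl Y1Zi, smul_mul_assoc, mul_assoc, Y2Zi, mul_smul_comm, smul_smul, mul_assoc]
    congr 1; ring
  have VZi : ∀ x, InV P Y1 Y2 Wi x → InV P Y1 Y2 Wi (Zi * x) := by
    intro x hx
    induction hx with
    | base hx => exact .base (V0Zi _ hx)
    | add _ _ h1 h2 => rw [mul_add]; exact h1.add h2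
    | smul c _ h1 => rw [mul_smul_comm]; exact h1.smul c
    | y1 hx h1 => rw [tl Y1Zi, smul_mul_assoc, mul_assoc]; exact h1.y1.smul _
    | y2 hx h1 => rw [tl Y2Zi, smul_mul_assoc, mul_assoc]; exact h1.y2.smul _
    | wi hx h1 => rw [tl WiZi, smul_mul_assoc, mul_assoc]; exact h1.wi.smul _
  have V0 : P 0 := ⟨0, 0, .zero, .zero, by simp⟩
  have Ve : InV P Y1 Y2 Wi e := .base ⟨e, 0, .base, .zero, by simp⟩
  let S : Subalgebra ℂ A :=
    { carrier := {x | ∀ v, InV P Y1 Y2 Wi v → InV P Y1 Y2 Wi (x * v)}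
      mul_mem' := by intro a b ha hb v hv; rw [mul_assoc]; exact ha _ (hb _ hv)
      add_mem' := by intro a b ha hb v hv; rw [add_mul]; exact (ha _ hv).add (hb _ hv)
      algebraMap_mem' := by
        intro c v hv; rw [Algebra.algebraMap_eq_smul_one, smul_mul_assoc, one_mul]; exact hv.smul c }
  have hye : InV P Y1 Y2 Wi (y * e) :=
    hgen S VT (fun v hv => (VX v hv).1) (fun v hv => (VX v hv).2) (fun v hv => hv.y1) (fun v hv => hv.y2)
      (fun v hv => hv.wi) VZi y e Ve
  have Y1Y1 : Y1 * Y1 = C * Y1 - W := by simp only [hC, hW, add_mul, h.YY]; abel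
  have Y2e : Y2 = C - Y1 := by simp [hC]
  have Y1C : Y1 * C = C * Y1 := by simp only [hC, mul_add, add_mul, h.YY]
  have Y1W : Y1 * W = W * Y1 := by simp only [hW, mul_assoc, h.YY]
  have Y1Wi : Y1 * Wi = Wi * Y1 := by
    simpa using qcomm_inv (s := 1) (s' := 1) (by simp) h.WWi h.WiW (by simpa using Y1W)
  have fin : ∀ x, InV P Y1 Y2 Wi x → e * x ∈ R ∧ e * (Y1 * x) ∈ R := by
    have abs : ∀ {a x : A}, e * a = a * e → a * e ∈ R → e * x ∈ R → e * (a * x) ∈ R := by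
      intro a x h1 h2 h3
      have : e * (a * x) = (a * e) * (e * x) := by rw [tl h1, mul_assoc, mul_assoc, tl i]
      rw [this]; exact hRm _ h2 _ h3
    intro x hx
    induction hx with
    | base hx =>
      obtain ⟨a, b, ha, hb, rfl⟩ := hx
      obtain ⟨ea, ra, -⟩ := D1 a ha
      obtain ⟨eb, rb, -⟩ := D1 b hb
      rw [mul_add, ea, mul_add Y1, mul_add e]
      refine ⟨R.add_mem ra ?_, R.add_mem ?_ ?_⟩
      · rw [← eb, ← mul_assoc, ← mul_assoc]; exact hRm _ rX _ rb
      · rw [← ea, ← mul_assoc, ← mul_assoc]; exact hRm _ rY _ ra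
      · rw [← eb, ← mul_assoc Y1, ← mul_assoc, ← mul_assoc]; exact hRm _ rU _ rb
    | add _ _ h1 h2 =>
      rw [mul_add, mul_add, mul_add]; exact ⟨R.add_mem h1.1 h2.1, R.add_mem h1.2 h2.2⟩
    | smul c _ h1 =>
      rw [mul_smul_comm, mul_smul_comm, mul_smul_comm]; exact ⟨R.smul_mem c h1.1, R.smul_mem c h1.2⟩
    | @y1 x hx h1 =>
      refine ⟨h1.2, ?_⟩
      rw [tl Y1Y1, sub_mul, mul_sub, mul_assoc]
      exact R.sub_mem (abs a1 rC h1.2) (abs a2 rW h1.1)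
    | @y2 x hx h1 =>
      constructor
      · rw [Y2e, sub_mul, mul_sub]; exact R.sub_mem (abs a1 rC h1.1) h1.2
      · rw [← mul_assoc Y1, ← hW]; exact abs a2 rW h1.1
    | wi hx h1 =>
      rw [tl Y1Wi, mul_assoc]; exact ⟨abs a3 rWi h1.1, abs a3 rWi h1.2⟩
  rw [mul_assoc]; exact (fin _ hye).1

end Surj

section Ind
variable {q t : ℂ} {K : Type*} [Field K] [Algebra ℂ K]

/-- support condition -/
def Sup (F : ℤ → ℤ → K) (k n : ℕ) : Prop :=
  ∀ i j : ℤ, F i j ≠ 0 → i + j = k + 2 * n ∧ i - j ≤ k ∧ j - i ≤ k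

abbrev fixS (s : K →ₐ[ℂ] K) : Subalgebra ℂ K := AlgHom.equalizer s (AlgHom.id ℂ K)

theorem deg_cases (z : Bool × ℕ × ℕ) (k n : ℕ) (h1 : z.2.1 + z.1.toNat = k) (h2 : z.2.2 = n) :
    z = (false, k, n) ∨ ∃ k', k = k' + 1 ∧ z = (true, k', n) := by
  obtain ⟨b, c, d⟩ := z
  subst h1 h2
  cases b <;> simp

theorem indep_top (s : K →ₐ[ℂ] K) {y1 y2 : K} (hy : y1 ≠ y2) (hs1 : s y1 = y2)
    (F : Bool × ℕ × ℕ → (ℤ → ℤ → K))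
    (h0 : ∀ b n, Sup (F (false, b, n)) b n)
    (h0' : ∀ b n : ℕ, F (false, b, n) (b + n) n ≠ 0)
    (h1 : ∀ b n, Sup (F (true, b, n)) (b + 1) n)
    (h1' : ∀ b n : ℕ, F (true, b, n) (b + 1 + n) n = y1 * F (false, b + 1, n) (b + 1 + n) n) :
    LinearIndependent (fixS s) F := by
  rw [linearIndependent_iff]
  intro l hl
  by_contra hne
  let deg : Bool × ℕ × ℕ → ℕ := fun x => x.2.1 + x.1.toNat
  obtain ⟨x, hx, hmax⟩ := Finset.exists_max_image l.support deg (Finsupp.support_nonempty_iff.2 hne)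
  have key : ∀ a b : K, s a = a → s b = b → a + b * y1 = 0 → a = 0 ∧ b = 0 := by
    intro a b ha hb hab
    have h2 : a + b * y2 = 0 := by
      have := congrArg s hab
      simpa [ha, hb, hs1] using this
    have h3 : b * (y1 - y2) = 0 := by linear_combination hab - h2
    have h4 : b = 0 := by
      rcases mul_eq_zero.1 h3 with h | h
      · exact h
      · exact absurd (sub_eq_zero.1 h) hy
    subst h4
    exact ⟨by simpa using hab, rfl⟩
  have hS : ∀ c : fixS s, s (c : K) = c := fun c => c.2
  -- evaluate
  set k := deg x with hk
  set n := x.2.2 with hn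
  have hev : ∑ z ∈ l.support, (l z : K) * F z (k + n) n = 0 := by
    have := congrFun (congrFun hl (k + n)) n
    rw [Finsupp.linearCombination_apply, Finsupp.sum, Finset.sum_apply, Finset.sum_apply] at this
    exact this
  have hsup : ∀ z, Sup (F z) (deg z) z.2.2 := by
    rintro ⟨_ | _, b, m⟩
    · simpa [deg] using h0 b m
    · simpa [deg] using h1 b m
  have hzero : ∀ z ∈ l.support, ¬ (deg z = k ∧ z.2.2 = n) → (l z : K) * F z (k + n) n = 0 := by
    intro z hz hzn
    by_contra hcon
    have h3 := hsup z _ _ (right_ne_zero_of_mul hcon)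
    have h4 := hmax z hz
    apply hzn
    constructor <;> omega
  have hlz : ∀ z, z ∉ l.support → (l z : K) = 0 := by
    intro z hz
    have := Finsupp.notMem_support_iff.1 hz
    simp [this]
  -- the sum reduces
  cases hkc : k with
  | zero =>
    have hxe : x = (false, 0, n) := by
      rcases deg_cases x k n rfl rfl with h | ⟨k', h, -⟩
      · rw [h, hkc]
      · omega
    have : ∑ z ∈ l.support, (l z : K) * F z (k + n) n = (l x : K) * F x (k + n) n := by
      apply Finset.sum_eq_single_of_mem x hx
      intro z hz hzx
      apply hzero z hz
      rintro ⟨e1, e2⟩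
      apply hzx
      rw [hxe]
      rcases deg_cases z k n e1 e2 with h | ⟨k', h, -⟩
      · rw [h, hkc]
      · omega
    rw [this] at hev
    rcases mul_eq_zero.1 hev with h | h
    · exact (Finsupp.mem_support_iff.1 hx) (Subtype.ext h)
    · rw [hxe, hkc] at h; exact h0' 0 n h
  | succ k' =>
    have hx2 : x = (false, k' + 1, n) ∨ x = (true, k', n) := by
      rcases deg_cases x k n rfl rfl with h | ⟨k'', h, h'⟩
      · left; rw [h, hkc]
      · right
        have : k'' = k' := by omega
        rw [h', this]
    have e1 : ∑ z ∈ l.support, (l z : K) * F z (k + n) n =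
        ∑ z ∈ l.support ∪ {(false, k' + 1, n), (true, k', n)}, (l z : K) * F z (k + n) n := by
      apply Finset.sum_subset Finset.subset_union_left
      intro z _ hz
      rw [hlz z hz, zero_mul]
    have e2 : ∑ z ∈ l.support ∪ {(false, k' + 1, n), (true, k', n)}, (l z : K) * F z (k + n) n =
        ∑ z ∈ {(false, k' + 1, n), (true, k', n)}, (l z : K) * F z (k + n) n := by
      symm
      apply Finset.sum_subset Finset.subset_union_right
      intro z hz hz'
      by_cases hzs : z ∈ l.support
      · apply hzero z hzs
        rintro ⟨f1, f2⟩
        apply hz'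
        rcases deg_cases z k n f1 f2 with h | ⟨k'', h, h'⟩
        · rw [h, hkc]; simp
        · have : k'' = k' := by omega
          rw [h', this]; simp
      · rw [hlz z hzs, zero_mul]
    rw [e1, e2, Finset.sum_pair (by simp), hkc] at hev
    have h1k := h1' k' n
    push_cast at hev
    rw [h1k] at hev
    have h0k := h0' (k' + 1) n
    push_cast at h0k
    have : (l (false, k' + 1, n) : K) + (l (true, k', n) : K) * y1 = 0 := by
      apply mul_right_cancel₀ h0k
      linear_combination hev
    obtain ⟨g1, g2⟩ := key _ _ (hS _) (hS _) this
    apply Finsupp.mem_support_iff.1 hx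
    rcases hx2 with h | h <;> rw [h] <;> apply Subtype.ext
    · exact g1
    · exact g2

end Ind

section Rep
variable {q t : ℂ}

abbrev mkD (q t : ℂ) : FD →ₐ[ℂ] DAHA q t := RingQuot.mkAlgHom ℂ (DRel q t)

theorem rep_of_base {E : Type*} [Ring E] [Algebra ℂ E] (hq : q ≠ 0) (ht : t ≠ 0)
    {T p pi Y1 Y2 Y1i Y2i : E}
    (hT : T * T = 1 + (t - t⁻¹) • T) (pp : p * pi = 1) (pip : pi * p = 1)
    (y1 : Y1 * Y1i = 1) (y1' : Y1i * Y1 = 1) (y2 : Y2 * Y2i = 1) (y2' : Y2i * Y2 = 1)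
    (YY : Y1 * Y2 = Y2 * Y1) (pY2 : p * Y2 = Y1 * p) (pY1 : p * Y1 = q⁻¹ ^ 2 • (Y2 * p))
    (ppT : p * (p * T) = T * (p * p)) (TY : T * Y2 = Y1 * (T - (t - t⁻¹) • 1)) :
    ∃ ρ : DAHA q t →ₐ[ℂ] E, ρ (_root_.T q t) = T ∧ ρ (_root_.X1 q t) = (T - (t - t⁻¹) • 1) * p ∧
      ρ (_root_.X2 q t) = p * T ∧ ρ (_root_.Y1 q t) = Y1 ∧ ρ (_root_.Y2 q t) = Y2 ∧
      ρ (_root_.X1 q t) * ρ (_root_.X2 q t) = p * p := by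
  have tti : T * (T - (t - t⁻¹) • 1) = 1 := by
    rw [mul_sub, hT]; simp
  have tit : (T - (t - t⁻¹) • 1) * T = 1 := by
    rw [sub_mul, hT]; simp
  set Ti := T - (t - t⁻¹) • (1 : E) with hTi
  let v : DGen → E := fun g => match g with
    | .T => T | .Ti => Ti | .X1 => Ti * p | .X1i => pi * T | .X2 => p * T | .X2i => Ti * pi
    | .Y1 => Y1 | .Y1i => Y1i | .Y2 => Y2 | .Y2i => Y2i
  let f := FreeAlgebra.lift ℂ v
  have hf : ∀ g, f (gD g) = v g := fun g => by simp [f, gD]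
  have XX : Ti * p * (p * T) = p * p := by
    rw [mul_assoc, ppT, ← mul_assoc, tit, one_mul]
  have hqq : q ^ 2 * q⁻¹ ^ 2 = 1 := by field_simp
  have ppY : p * (p * Y1) = q⁻¹ ^ 2 • (Y1 * (p * p)) := by
    rw [pY1, mul_smul_comm, ← mul_assoc, pY2, mul_assoc]
  have piY : pi * Y1 = Y2 * pi := by
    calc pi * Y1 = pi * (Y1 * p) * pi := by simp only [mul_assoc, pp, mul_one]
      _ = _ := by rw [← pY2, ← mul_assoc, pip, one_mul]
  have hrel : ∀ ⦃a b : FD⦄, DRel q t a b → f a = f b := by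
    intro a b hab
    cases hab <;> simp only [map_mul, map_one, map_add, map_sub, map_smul, map_zero, hf, v, AlgHom.commutes]
    case TTi => exact tti
    case TiT => exact tit
    case X1X1i => rw [mul_assoc, tl pp, one_mul, tit]
    case X1iX1 => rw [mul_assoc, tl tti, one_mul, pip]
    case X2X2i => rw [mul_assoc, tl tti, one_mul, pp]
    case X2iX2 => rw [mul_assoc, tl pip, one_mul, tit]
    case Y1Y1i => exact y1
    case Y1iY1 => exact y1'
    case Y2Y2i => exact y2
    case Y2iY2 => exact y2'
    case TX1T => rw [← mul_assoc, tti, one_mul]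
    case TiY1Ti => rw [mul_assoc, ← TY, ← mul_assoc, tit, one_mul]
    case Xcomm => rw [XX, mul_assoc, tl tti, one_mul]
    case Ycomm => exact YY
    case YXX => rw [XX, mul_assoc, ppY, smul_smul, hqq, one_smul]
    case X1iY2 =>
      rw [mul_assoc, TY, tl piY]; simp only [mul_assoc, tl tti, one_mul]
    case hecke =>
      rw [mul_sub, add_mul, add_mul, hT, Algebra.algebraMap_eq_smul_one, Algebra.algebraMap_eq_smul_one]
      simp only [smul_mul_assoc, mul_smul_comm, one_mul, mul_one, smul_smul, inv_mul_cancel₀ ht, mul_inv_cancel₀ ht]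
      match_scalars <;> field_simp <;> ring
  let ρ : DAHA q t →ₐ[ℂ] E := RingQuot.liftAlgHom ℂ ⟨f, hrel⟩
  have hρ : ∀ g, ρ (mkD q t (gD g)) = v g := fun g => by
    rw [← hf]; exact RingQuot.liftAlgHom_mkAlgHom_apply ℂ f hrel (gD g)
  exact ⟨ρ, hρ .T, hρ .X1, hρ .X2, hρ .Y1, hρ .Y2, by
    rw [← XX]; exact congrArg₂ _ (hρ .X1) (hρ .X2)⟩

variable {K : Type*} [Field K] [Algebra ℂ K]

structure KD (q t : ℂ) (s w wi : K →ₐ[ℂ] K) (y1 y2 : K) : Prop where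
  ss : ∀ x, s (s x) = x
  wwi : ∀ x, w (wi x) = x
  wiw : ∀ x, wi (w x) = x
  sww : ∀ x, s (w (w x)) = w (w (s x))
  s1 : s y1 = y2
  s2 : s y2 = y1
  w1 : w y1 = q⁻¹ ^ 2 • y2
  w2 : w y2 = y1
  hy : y1 ≠ y2
  hy1 : y1 ≠ 0
  hy2 : y2 ≠ 0
  hyt : t⁻¹ • y1 ≠ t • y2

def al (t : ℂ) (y1 y2 : K) : K := ((t - t⁻¹) • y1) / (y1 - y2)
def be (t : ℂ) (y1 y2 : K) : K := (t⁻¹ • y1 - t • y2) / (y1 - y2)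

def opT (t : ℂ) (s : K →ₐ[ℂ] K) (y1 y2 : K) : Module.End ℂ (ℤ → ℤ → K) where
  toFun F i j := al t y1 y2 * F i j + be t y1 y2 * s (F j i)
  map_add' F G := by funext i j; simp only [Pi.add_apply, map_add]; ring
  map_smul' c F := by
    funext i j; simp only [Pi.smul_apply, map_smul, RingHom.id_apply, smul_add, mul_smul_comm]

def opP (w : K →ₐ[ℂ] K) : Module.End ℂ (ℤ → ℤ → K) where
  toFun F i j := w (F (j - 1) i)
  map_add' F G := by funext i j; simp only [Pi.add_apply, map_add]
  map_smul' c F := by funext i j; simp only [Pi.smul_apply, map_smul, RingHom.id_apply]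

def opPi (wi : K →ₐ[ℂ] K) : Module.End ℂ (ℤ → ℤ → K) where
  toFun F i j := wi (F j (i + 1))
  map_add' F G := by funext i j; simp only [Pi.add_apply, map_add]
  map_smul' c F := by funext i j; simp only [Pi.smul_apply, map_smul, RingHom.id_apply]

def opY (y : K) : Module.End ℂ (ℤ → ℤ → K) where
  toFun F i j := y * F i j
  map_add' F G := by funext i j; simp only [Pi.add_apply, mul_add]
  map_smul' c F := by funext i j; simp only [Pi.smul_apply, RingHom.id_apply, mul_smul_comm]

theorem KD.rep {s w wi : K →ₐ[ℂ] K} {y1 y2 : K} (h : KD q t s w wi y1 y2) (hq : q ≠ 0) (ht : t ≠ 0) :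
    ∃ ρ : DAHA q t →ₐ[ℂ] Module.End ℂ (ℤ → ℤ → K), ρ (_root_.T q t) = opT t s y1 y2 ∧
      ρ (_root_.X1 q t) = (opT t s y1 y2 - (t - t⁻¹) • 1) * opP w ∧
      ρ (_root_.X2 q t) = opP w * opT t s y1 y2 ∧ ρ (_root_.Y1 q t) = opY y1 ∧
      ρ (_root_.Y2 q t) = opY y2 ∧ ρ (_root_.X1 q t) * ρ (_root_.X2 q t) = opP w * opP w := by
  have hyy : y1 - y2 ≠ 0 := sub_ne_zero.2 h.hy
  have hyy' : y2 - y1 ≠ 0 := sub_ne_zero.2 (Ne.symm h.hy)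
  have hτ : algebraMap ℂ K t ≠ 0 := by simpa using ht
  have hg : algebraMap ℂ K q ≠ 0 := by simpa using hq
  have sal : s (al t y1 y2) = ((t - t⁻¹) • y2) / (y2 - y1) := by
    simp [al, h.s1, h.s2]
  have sbe : s (be t y1 y2) = (t⁻¹ • y2 - t • y1) / (y2 - y1) := by
    simp [be, h.s1, h.s2]
  have wwal : w (w (al t y1 y2)) = al t y1 y2 := by
    simp only [al, map_div₀, map_sub, map_smul, h.w1, h.w2]
    simp only [Algebra.smul_def, map_pow, map_inv₀, map_sub]
    field_simp
  have wwbe : w (w (be t y1 y2)) = be t y1 y2 := by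
    simp only [be, map_div₀, map_sub, map_smul, h.w1, h.w2]
    simp only [Algebra.smul_def, map_pow, map_inv₀, map_sub]
    field_simp
  refine rep_of_base (p := opP w) (pi := opPi wi) (Y1i := opY y1⁻¹) (Y2i := opY y2⁻¹) hq ht
    ?_ ?_ ?_ ?_ ?_ ?_ ?_ ?_ ?_ ?_ ?_ ?_
  · ext F i j
    simp only [Module.End.mul_apply, LinearMap.add_apply, LinearMap.smul_apply, Module.End.one_apply,
      Pi.add_apply, Pi.smul_apply, opT, LinearMap.coe_mk, AddHom.coe_mk, map_add, map_mul, h.ss, sal, sbe]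
    simp only [al, be, Algebra.smul_def, map_pow, map_inv₀, map_sub]
    rw [← neg_sub y1 y2]
    field_simp
    ring
  · ext F i j
    simp [opP, opPi, h.wwi]
  · ext F i j
    simp [opP, opPi, h.wiw]
  · ext F i j
    simp [opY, h.hy1]
  · ext F i j
    simp [opY, h.hy1]
  · ext F i j
    simp [opY, h.hy2]
  · ext F i j
    simp [opY, h.hy2]
  · ext F i j
    simp [opY, mul_left_comm]
  · ext F i j
    simp [opY, opP, h.w2]
  · ext F i j
    simp [opY, opP, h.w1]
  · ext F i j
    simp only [Module.End.mul_apply, opT, opP, LinearMap.coe_mk, AddHom.coe_mk, map_add, map_mul, wwal, wwbe, h.sww]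
  · ext F i j
    simp only [Module.End.mul_apply, LinearMap.sub_apply, LinearMap.smul_apply, Module.End.one_apply,
      Pi.sub_apply, Pi.smul_apply, opT, opY, LinearMap.coe_mk, AddHom.coe_mk, map_mul, h.s2]
    simp only [al, be, Algebra.smul_def, map_pow, map_inv₀, map_sub]
    field_simp
    ring

end Rep

section Sig
variable {q t : ℂ} {K : Type*} [Field K] [Algebra ℂ K]

theorem opX1_apply (w s : K →ₐ[ℂ] K) (y1 y2 : K) (F : ℤ → ℤ → K) (i j : ℤ) :
    ((opT t s y1 y2 - (t - t⁻¹) • 1) * opP w) F i j =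
      (al t y1 y2 - algebraMap ℂ K (t - t⁻¹)) * w (F (j - 1) i) + be t y1 y2 * s (w (F (i - 1) j)) := by
  simp only [Module.End.mul_apply, LinearMap.sub_apply, LinearMap.smul_apply, Module.End.one_apply,
      Pi.sub_apply, Pi.smul_apply, opT, opP, LinearMap.coe_mk, AddHom.coe_mk]
  rw [Algebra.smul_def]; ring

theorem opX2_apply (w s : K →ₐ[ℂ] K) (y1 y2 : K) (F : ℤ → ℤ → K) (i j : ℤ) :
    (opP w * opT t s y1 y2) F i j =
      w (al t y1 y2) * w (F (j - 1) i) + w (be t y1 y2) * w (s (F i (j - 1))) := by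
  simp only [Module.End.mul_apply, opT, opP, LinearMap.coe_mk, AddHom.coe_mk, map_add, map_mul]

theorem KD.sigma {s w wi : K →ₐ[ℂ] K} {y1 y2 : K} (h : KD q t s w wi y1 y2) (hq : q ≠ 0) (ht : t ≠ 0)
    (ht2 : 1 + t ^ 2 ≠ 0) {Wi Zi : DAHA q t}
    (hD : DH q t (T q t) (X1 q t) (X2 q t) (Y1 q t) (Y2 q t) Wi Zi)
    (Φ : AlgBt q t →ₗ[ℂ] DAHA q t) (hm : ∀ x y, Φ (x * y) = Φ x * Φ y) (h1 : Φ 1 = ee t (T q t))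
    (hv : ∀ g, Φ (mkB q t (gB g)) = vH q t (T q t) (X1 q t) (X2 q t) (Y1 q t) (Y2 q t) Wi Zi g) :
    ∃ σ : AlgBt q t →ₗ[ℂ] (ℤ → ℤ → K),
      (∀ x i j, σ (c1 q t * x) i j = (y1 + y2) * σ x i j) ∧
      (∀ x i j, σ (c2 q t * x) i j = (q ^ 2 • (y1 * y2)) * σ x i j) ∧
      (∀ x, Φ x = 0 → σ x = 0) ∧
      LinearIndependent (fixS s) (fun z : Bool × ℕ × ℕ =>
        σ ((if z.1 then rr q t else 1) * (d1 q t ^ z.2.1 * d2 q t ^ z.2.2))) := by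
  obtain ⟨ρ, rT, rX1, rX2, rY1, rY2, rX12⟩ := h.rep hq ht
  have hyy : y1 - y2 ≠ 0 := sub_ne_zero.2 h.hy
  have hτ : algebraMap ℂ K t ≠ 0 := by simpa using ht
  let v0 : ℤ → ℤ → K := fun i j => if i = 0 ∧ j = 0 then 1 else 0
  have Tv : ρ (T q t) v0 = t • v0 := by
    rw [rT]; funext i j
    simp only [opT, LinearMap.coe_mk, AddHom.coe_mk, Pi.smul_apply, v0]
    by_cases hij : i = 0 ∧ j = 0
    · obtain ⟨rfl, rfl⟩ := hij
      simp only [and_self, if_true, map_one, mul_one, al, be, Algebra.smul_def, map_sub, map_inv₀]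
      field_simp
      ring
    · have : ¬ (j = 0 ∧ i = 0) := fun hh => hij ⟨hh.2, hh.1⟩
      simp [hij, this]
  have ev : ρ (ee t (T q t)) v0 = v0 := by
    simp only [ee, map_smul, map_add, map_one, LinearMap.smul_apply, LinearMap.add_apply, Tv,
      Module.End.one_apply, smul_smul]
    rw [← one_smul ℂ v0, smul_smul, ← add_smul, smul_smul]; congr 1; field_simp
  let σ : AlgBt q t →ₗ[ℂ] (ℤ → ℤ → K) := (LinearMap.applyₗ v0) ∘ₗ ρ.toLinearMap ∘ₗ Φ
  have hσ : ∀ x, σ x = ρ (Φ x) v0 := fun x => rfl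
  have hσm : ∀ x y, σ (x * y) = ρ (Φ x) (σ y) := by
    intro x y; simp [hσ, hm]
  have hσe : ∀ y, ρ (ee t (T q t)) (σ y) = σ y := by
    intro y; rw [← h1, ← hσm, one_mul]
  have s1 : σ 1 = v0 := by rw [hσ, h1, ev]
  have sc1 : ∀ x, σ (c1 q t * x) = opY y1 (σ x) + opY y2 (σ x) := by
    intro x
    rw [hσm]; erw [hv .c1]
    simp only [vH, map_mul, map_add, Module.End.mul_apply, hσe, rY1, rY2, LinearMap.add_apply]
  have sc2 : ∀ x, σ (c2 q t * x) = q ^ 2 • opY y1 (opY y2 (σ x)) := by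
    intro x
    rw [hσm]; erw [hv .c2]
    simp only [vH, map_mul, map_smul, Module.End.mul_apply, hσe, rY1, rY2, LinearMap.smul_apply]
  have sd1 : ∀ x, σ (d1 q t * x) = ρ (X1 q t) (σ x) + ρ (X2 q t) (σ x) := by
    intro x
    rw [hσm]; erw [hv .d1]
    simp only [vH, map_mul, map_add, Module.End.mul_apply, hσe, LinearMap.add_apply]
  have sd2 : ∀ x, σ (d2 q t * x) = q ^ 2 • ρ (X1 q t) (ρ (X2 q t) (σ x)) := by
    intro x
    rw [hσm]; erw [hv .d2]
    simp only [vH, map_mul, map_smul, Module.End.mul_apply, hσe, LinearMap.smul_apply]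
  have sr : ∀ x, σ (rr q t * x) = opY y1 (ρ (X1 q t) (σ x)) + t⁻¹ ^ 2 • opY y2 (ρ (X2 q t) (σ x)) := by
    intro x
    rw [hσm]; erw [hv .r]
    simp only [vH]
    rw [hD.u_nf ht]
    simp only [map_mul, map_smul, map_add, Module.End.mul_apply, hσe, LinearMap.smul_apply,
      LinearMap.add_apply, rY1, rY2]
    match_scalars <;> field_simp <;> ring
  have X12 : ∀ F i j, ρ (X1 q t) (ρ (X2 q t) F) i j = w (w (F (i - 1) (j - 1))) := by
    intro F i j
    rw [← Module.End.mul_apply, rX12]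
    rfl
  refine ⟨σ, ?_, ?_, ?_, ?_⟩
  · intro x i j; rw [sc1]; simp [opY, add_mul]
  · intro x i j; rw [sc2]; simp [opY, mul_assoc]
  · intro x hx; rw [hσ, hx]; simp
  have hbe : be t y1 y2 ≠ 0 := div_ne_zero (sub_ne_zero.2 h.hyt) hyy
  have inj : ∀ (f : K →ₐ[ℂ] K) {x : K}, x ≠ 0 → f x ≠ 0 := fun f x hx => by simpa using hx
  have nz : ∀ {F : ℤ → ℤ → K} {k n : ℕ}, Sup F k n → ∀ i j : ℤ,
      ¬ (i + j = k + 2 * n ∧ i - j ≤ k ∧ j - i ≤ k) → F i j = 0 := by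
    intro F k n hF i j hij
    by_contra hne; exact hij (hF i j hne)
  have supX1 : ∀ {F : ℤ → ℤ → K} {k n : ℕ}, Sup F k n → Sup (ρ (X1 q t) F) (k + 1) n := by
    intro F k n hF i j
    contrapose!
    intro hij
    rw [rX1, opX1_apply, nz hF (j - 1) i, nz hF (i - 1) j]
    · simp
    · push_cast at *; omega
    · push_cast at *; omega
  have supX2 : ∀ {F : ℤ → ℤ → K} {k n : ℕ}, Sup F k n → Sup (ρ (X2 q t) F) (k + 1) n := by
    intro F k n hF i j
    contrapose!
    intro hij
    rw [rX2, opX2_apply, nz hF (j - 1) i, nz hF i (j - 1)]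
    · simp
    · push_cast at *; omega
    · push_cast at *; omega
  have topX1 : ∀ {F : ℤ → ℤ → K} {k n : ℕ}, Sup F k n →
      ρ (X1 q t) F (k + 1 + n) n = be t y1 y2 * s (w (F (k + n) n)) := by
    intro F k n hF
    rw [rX1, opX1_apply, nz hF (n - 1) (k + 1 + n) (by omega)]
    have : (k + 1 + n - 1 : ℤ) = k + n := by ring
    rw [this]; simp
  have topX2 : ∀ {F : ℤ → ℤ → K} {k n : ℕ}, Sup F k n →
      ρ (X2 q t) F (k + 1 + n) n = 0 := by
    intro F k n hF
    rw [rX2, opX2_apply, nz hF (n - 1) (k + 1 + n) (by omega), nz hF (k + 1 + n) (n - 1) (by omega)]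
    simp
  have D2 : ∀ n : ℕ, Sup (σ (d2 q t ^ n)) 0 n ∧ σ (d2 q t ^ n) n n ≠ 0 := by
    intro n
    induction n with
    | zero =>
      rw [pow_zero, s1]
      constructor
      · intro i j hij
        simp only [v0, ne_eq, ite_eq_right_iff, not_forall] at hij
        obtain ⟨⟨rfl, rfl⟩, -⟩ := hij
        simp
      · simp [v0]
    | succ n ih =>
      rw [pow_succ', sd2]
      constructor
      · intro i j hij
        rw [Pi.smul_apply, Pi.smul_apply, X12] at hij
        have : σ (d2 q t ^ n) (i - 1) (j - 1) ≠ 0 := by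
          intro h0; rw [h0] at hij; simp at hij
        have := ih.1 _ _ this
        push_cast at *; omega
      · rw [Pi.smul_apply, Pi.smul_apply, X12]
        refine smul_ne_zero (pow_ne_zero 2 hq) (inj w (inj w ?_))
        push_cast
        simpa using ih.2
  have D1 : ∀ b n : ℕ, Sup (σ (d1 q t ^ b * d2 q t ^ n)) b n ∧
      σ (d1 q t ^ b * d2 q t ^ n) (b + n) n ≠ 0 := by
    intro b n
    induction b with
    | zero => simpa using D2 n
    | succ b ih =>
      rw [pow_succ', mul_assoc, sd1]
      constructor
      · intro i j hij
        by_cases h2 : ρ (X1 q t) (σ (d1 q t ^ b * d2 q t ^ n)) i j = 0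
        · refine supX2 ih.1 i j ?_
          intro h3; apply hij; rw [Pi.add_apply, Pi.add_apply, h2, h3, add_zero]
        · exact supX1 ih.1 i j h2
      · push_cast
        rw [Pi.add_apply, Pi.add_apply, topX1 ih.1, topX2 ih.1, add_zero]
        exact mul_ne_zero hbe (inj s (inj w ih.2))
  refine indep_top s h.hy h.s1 _ ?_ ?_ ?_ ?_
  · intro b n; simpa using (D1 b n).1
  · intro b n; simpa using (D1 b n).2
  · intro b n
    simp only [if_true, sr]
    intro i j hij
    by_cases h2 : ρ (X1 q t) (σ (d1 q t ^ b * d2 q t ^ n)) i j = 0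
    · refine supX2 (D1 b n).1 i j ?_
      intro h3; apply hij; simp [opY, h2, h3]
    · exact supX1 (D1 b n).1 i j h2
  · intro b n
    simp only [if_true, sr, pow_succ' (d1 q t) b, mul_assoc, sd1, Bool.false_eq_true, if_false, one_mul]
    simp only [Pi.add_apply, Pi.smul_apply, opY, LinearMap.coe_mk, AddHom.coe_mk, topX1 (D1 b n).1,
      topX2 (D1 b n).1]
    simp

end Sig

section Fld
variable {q t : ℂ}

abbrev R2 : Type := MvPolynomial (Fin 2) ℂ
abbrev K2 : Type := FractionRing R2

theorem lift_K2 (f g : R2 →ₐ[ℂ] R2) (hgf : ∀ x, g (f x) = x) :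
    ∃ F : K2 →ₐ[ℂ] K2, ∀ x : R2, F (algebraMap R2 K2 x) = algebraMap R2 K2 (f x) := by
  let φ : R2 →ₐ[ℂ] K2 := (Algebra.algHom ℂ R2 K2).comp f
  have hφ : Function.Injective φ :=
    (IsFractionRing.injective R2 K2).comp (Function.LeftInverse.injective hgf)
  refine ⟨IsFractionRing.liftAlgHom hφ, fun x => ?_⟩
  rw [IsFractionRing.liftAlgHom_apply]
  exact IsFractionRing.lift_algebraMap hφ x

theorem ext_K2 {F G : K2 →ₐ[ℂ] K2}
    (h0 : F (algebraMap R2 K2 (MvPolynomial.X 0)) = G (algebraMap R2 K2 (MvPolynomial.X 0)))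
    (h1 : F (algebraMap R2 K2 (MvPolynomial.X 1)) = G (algebraMap R2 K2 (MvPolynomial.X 1))) (x : K2) :
    F x = G x := by
  have : F = G := by
    apply IsLocalization.algHom_ext (A := R2) (nonZeroDivisors R2)
    apply MvPolynomial.algHom_ext
    intro i
    fin_cases i
    · exact h0
    · exact h1
  rw [this]

open MvPolynomial in
theorem LI_K2 (hq : q ≠ 0) : LinearIndependent ℂ (fun p : ℕ × ℕ =>
    (algebraMap R2 K2 (X 0) + algebraMap R2 K2 (X 1)) ^ p.1 *
      (q ^ 2 • (algebraMap R2 K2 (X 0) * algebraMap R2 K2 (X 1))) ^ p.2) := by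
  have inj := IsFractionRing.injective R2 K2
  have b := (MvPolynomial.basisMonomials (Fin 2) ℂ).linearIndependent
  let ι : ℕ × ℕ → (Fin 2 →₀ ℕ) := fun p => Finsupp.single 0 p.1 + Finsupp.single 1 p.2
  have hι : Function.Injective ι := by
    intro p p' hp
    have h0 := DFunLike.congr_fun hp 0
    have h1 := DFunLike.congr_fun hp 1
    simp [ι] at h0 h1
    exact Prod.ext h0 h1
  have b1 := b.comp ι hι
  let θ : R2 →ₗ[ℂ] K2 := (Algebra.algHom ℂ R2 K2).toLinearMap ∘ₗ
    (symmetricSubalgebra (Fin 2) ℂ).val.toLinearMap ∘ₗ (esymmAlgHom (Fin 2) ℂ 2).toLinearMap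
  have hθ : Function.Injective θ := by
    refine inj.comp (Subtype.val_injective.comp (esymmAlgHom_fin_injective ℂ le_rfl))
  have b2 := b1.map' θ (LinearMap.ker_eq_bot.2 hθ)
  have b3 := b2.units_smul (fun p => (Units.mk0 (q ^ 2) (pow_ne_zero 2 hq)) ^ p.2)
  suffices hfun : (fun p : ℕ × ℕ =>
    (algebraMap R2 K2 (X 0) + algebraMap R2 K2 (X 1)) ^ p.1 *
      (q ^ 2 • (algebraMap R2 K2 (X 0) * algebraMap R2 K2 (X 1))) ^ p.2) =
      (fun p : ℕ × ℕ => (Units.mk0 (q ^ 2) (pow_ne_zero 2 hq)) ^ p.2) • ⇑θ ∘ ⇑(basisMonomials (Fin 2) ℂ) ∘ ι by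
    rw [hfun]; exact b3
  funext p
  have E2 : esymm (Fin 2) ℂ 2 = X 0 * X 1 := by
    rw [esymm, show Finset.powersetCard 2 (Finset.univ : Finset (Fin 2)) = {Finset.univ} from rfl]; simp
  have E1 : esymm (Fin 2) ℂ 1 = X 0 + X 1 := by
    rw [esymm_one]; simp
  have hm : MvPolynomial.basisMonomials (Fin 2) ℂ (ι p) = X 0 ^ p.1 * X 1 ^ p.2 := by
    rw [coe_basisMonomials, X_pow_eq_monomial, X_pow_eq_monomial, monomial_mul, one_mul]
  have h3 : θ (X 0 ^ p.1 * X 1 ^ p.2) = (algebraMap R2 K2 (X 0) + algebraMap R2 K2 (X 1)) ^ p.1 *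
      (algebraMap R2 K2 (X 0) * algebraMap R2 K2 (X 1)) ^ p.2 := by
    have : θ (X 0 ^ p.1 * X 1 ^ p.2) = algebraMap R2 K2 (esymmAlgHom (Fin 2) ℂ 2 (X 0 ^ p.1 * X 1 ^ p.2) : symmetricSubalgebra (Fin 2) ℂ).1 := rfl
    rw [this, esymmAlgHom_apply]
    simp [E1, E2]
  simp only [Pi.smul_apply', Function.comp_apply, hm, h3, smul_pow, mul_smul_comm]
  simp [Units.smul_def]

open MvPolynomial in
theorem exists_KD (hq : q ≠ 0) (ht : t ≠ 0) :
    ∃ s w wi : K2 →ₐ[ℂ] K2, ∃ y1 y2 : K2, KD q t s w wi y1 y2 ∧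
      LinearIndependent ℂ (fun p : ℕ × ℕ => (y1 + y2) ^ p.1 * (q ^ 2 • (y1 * y2)) ^ p.2) := by
  let s0 : R2 →ₐ[ℂ] R2 := aeval ![X 1, X 0]
  let w0 : R2 →ₐ[ℂ] R2 := aeval ![q⁻¹ ^ 2 • X 1, X 0]
  let wi0 : R2 →ₐ[ℂ] R2 := aeval ![X 1, q ^ 2 • X 0]
  have hqq : q ^ 2 * q⁻¹ ^ 2 = 1 := by field_simp
  have hqq' : q⁻¹ ^ 2 * q ^ 2 = 1 := by field_simp
  have e1 : ∀ x, s0 (s0 x) = x := by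
    intro x
    have : s0.comp s0 = AlgHom.id ℂ R2 := by
      apply MvPolynomial.algHom_ext; intro i; fin_cases i <;> simp [s0]
    exact DFunLike.congr_fun this x
  have e2 : ∀ x, w0 (wi0 x) = x := by
    intro x
    have : w0.comp wi0 = AlgHom.id ℂ R2 := by
      apply MvPolynomial.algHom_ext; intro i
      fin_cases i <;> simp [w0, wi0, smul_smul, hq]
    exact DFunLike.congr_fun this x
  have e3 : ∀ x, wi0 (w0 x) = x := by
    intro x
    have : wi0.comp w0 = AlgHom.id ℂ R2 := by
      apply MvPolynomial.algHom_ext; intro i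
      fin_cases i <;> simp [w0, wi0, smul_smul, hq]
    exact DFunLike.congr_fun this x
  have e4 : ∀ x, s0 (w0 (w0 x)) = w0 (w0 (s0 x)) := by
    intro x
    have : s0.comp (w0.comp w0) = w0.comp (w0.comp s0) := by
      apply MvPolynomial.algHom_ext; intro i
      fin_cases i <;> simp [w0, s0]
    exact DFunLike.congr_fun this x
  obtain ⟨s, hs⟩ := lift_K2 s0 s0 e1
  obtain ⟨w, hw⟩ := lift_K2 w0 wi0 e3
  obtain ⟨wi, hwi⟩ := lift_K2 wi0 w0 e2
  have inj := IsFractionRing.injective R2 K2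
  have am : ∀ (c : ℂ) (x : R2), algebraMap R2 K2 (c • x) = c • algebraMap R2 K2 x :=
    fun c x => map_smul (Algebra.algHom ℂ R2 K2) c x
  refine ⟨s, w, wi, algebraMap R2 K2 (X 0), algebraMap R2 K2 (X 1), ?_, ?_⟩
  · constructor
    · apply ext_K2 (F := s.comp s) (G := AlgHom.id ℂ K2)
      · simp only [AlgHom.comp_apply, hs, e1, AlgHom.id_apply]
      · simp only [AlgHom.comp_apply, hs, e1, AlgHom.id_apply]
    · apply ext_K2 (F := w.comp wi) (G := AlgHom.id ℂ K2)
      · simp only [AlgHom.comp_apply, hw, hwi, e2, AlgHom.id_apply]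
      · simp only [AlgHom.comp_apply, hw, hwi, e2, AlgHom.id_apply]
    · apply ext_K2 (F := wi.comp w) (G := AlgHom.id ℂ K2)
      · simp only [AlgHom.comp_apply, hw, hwi, e3, AlgHom.id_apply]
      · simp only [AlgHom.comp_apply, hw, hwi, e3, AlgHom.id_apply]
    · apply ext_K2 (F := s.comp (w.comp w)) (G := w.comp (w.comp s))
      · simp only [AlgHom.comp_apply, hw, hs, e4]
      · simp only [AlgHom.comp_apply, hw, hs, e4]
    · rw [hs]; simp [s0]
    · rw [hs]; simp [s0]
    · rw [hw]; simp only [w0, aeval_X, Matrix.cons_val_zero, am]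
    · rw [hw]; simp [w0]
    · intro h
      have := inj h
      exact absurd (X_injective this) (by decide)
    · rw [Ne, ← map_zero (algebraMap R2 K2), inj.eq_iff]; exact X_ne_zero _
    · rw [Ne, ← map_zero (algebraMap R2 K2), inj.eq_iff]; exact X_ne_zero _
    · rw [← am, ← am]
      intro h
      have := congrArg (aeval (![1, 0] : Fin 2 → ℂ)) (inj h)
      simp [ht] at this
  · exact LI_K2 hq

end Fld

section Span
variable {q t : ℂ} {A : Type*} [Ring A] [Algebra ℂ A] {v : BGen → A}

inductive InDp (v : BGen → A) : A → Prop
  | one : InDp v 1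
  | zero : InDp v 0
  | add {x y} : InDp v x → InDp v y → InDp v (x + y)
  | smul (c : ℂ) {x} : InDp v x → InDp v (c • x)
  | d1 {x} : InDp v x → InDp v (v .d1 * x)
  | d2 {x} : InDp v x → InDp v (v .d2 * x)

inductive InS (v : BGen → A) : A → Prop
  | base {x} : InDp v x → InS v x
  | rbase {x} : InDp v x → InS v (v .r * x)
  | zero : InS v 0
  | add {x y} : InS v x → InS v y → InS v (x + y)
  | smul (c : ℂ) {x} : InS v x → InS v (c • x)
  | c1 {x} : InS v x → InS v (v .c1 * x)
  | c2 {x} : InS v x → InS v (v .c2 * x)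

theorem InDp.comm (h : BR q t (1 : A) v) {x : A} (hx : InDp v x) : x * v .d2 = v .d2 * x := by
  induction hx with
  | one => simp
  | zero => simp
  | add _ _ a b => rw [add_mul, mul_add, a, b]
  | smul c _ a => rw [smul_mul_assoc, mul_smul_comm, a]
  | d1 _ a => rw [mul_assoc, a, ← mul_assoc, ← mul_assoc, h.d2d1]
  | d2 _ a => rw [mul_assoc, a]

theorem InS.sub {x y : A} (hx : InS v x) (hy : InS v y) : InS v (x - y) := by
  have := hx.add (hy.smul (-1))
  simpa [sub_eq_add_neg] using this

theorem InS.d2 (h : BR q t (1 : A) v) {x : A} (hx : InS v x) : InS v (v .d2 * x) := by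
  induction hx with
  | base a => exact .base a.d2
  | rbase a => rw [tl h.d2r, smul_mul_assoc, mul_assoc]; exact .smul _ (.rbase a.d2)
  | zero => rw [mul_zero]; exact .zero
  | add _ _ a b => rw [mul_add]; exact a.add b
  | smul c _ a => rw [mul_smul_comm]; exact a.smul c
  | c1 _ a => rw [tl h.d2c1, smul_mul_assoc, mul_assoc]; exact .smul _ a.c1
  | c2 _ a => rw [tl h.d2c2, smul_mul_assoc, mul_assoc]; exact .smul _ a.c2

theorem InS.d1r (h : BR q t (1 : A) v) {x : A} (hx : InS v x) :
    InS v (v .d1 * x) ∧ InS v (v .r * x) := by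
  induction hx with
  | base a => exact ⟨.base a.d1, .rbase a⟩
  | rbase a =>
    constructor
    · rw [tl h.d1r]; simp only [add_mul, smul_mul_assoc, mul_assoc]
      exact .add (.smul _ (.rbase a.d1)) (.smul _ (.c1 (.base a.d2)))
    · rw [tl h.rr]; simp only [add_mul, sub_mul, smul_mul_assoc, mul_assoc]
      exact .add (.sub (.sub (.smul _ (.c2 (.base a.d2))) (.smul _ (.c2 (.base a.d1.d1))))
        (.smul _ (.c1 (.c1 (.base a.d2))))) (.smul _ (.c1 (.rbase a.d1)))
  | zero => rw [mul_zero, mul_zero]; exact ⟨.zero, .zero⟩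
  | add _ _ a b => rw [mul_add, mul_add]; exact ⟨a.1.add b.1, a.2.add b.2⟩
  | smul c _ a => rw [mul_smul_comm, mul_smul_comm]; exact ⟨a.1.smul c, a.2.smul c⟩
  | c1 _ a =>
    constructor
    · rw [tl h.d1c1]; simp only [add_mul, smul_mul_assoc, mul_assoc]
      exact .add (.c1 a.1) (.smul _ a.2)
    · rw [tl h.rc1]; simp only [add_mul, smul_mul_assoc, mul_assoc]
      exact .add (.smul _ (.c1 a.2)) (.smul _ (.c2 a.1))
  | c2 _ a =>
    rw [tl h.d1c2, smul_mul_assoc, mul_assoc, tl h.rc2, smul_mul_assoc, mul_assoc]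
    exact ⟨.smul _ a.1.c2, .smul _ a.2.c2⟩

theorem InS.rd2 (h : BR q t (1 : A) v) {x : A} (hx : InS v x) : InS v (x * v .d2) := by
  induction hx with
  | base a => rw [a.comm h]; exact .base a.d2
  | rbase a => rw [mul_assoc, a.comm h]; exact .rbase a.d2
  | zero => rw [zero_mul]; exact .zero
  | add _ _ a b => rw [add_mul]; exact a.add b
  | smul c _ a => rw [smul_mul_assoc]; exact a.smul c
  | c1 _ a => rw [mul_assoc]; exact a.c1
  | c2 _ a => rw [mul_assoc]; exact a.c2

theorem conj_swap {a b bi : A} {s s' : ℂ} (hs : s' * s = 1) (h1 : b * bi = 1) (h2 : bi * b = 1)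
    (h : b * a = s • (a * b)) : bi * a = s' • (a * bi) := by
  have e1 : bi * (b * a) * bi = s • (bi * (a * b) * bi) := by rw [h]; simp
  have e2 : bi * (b * a) * bi = a * bi := by rw [← mul_assoc, h2, one_mul]
  have e3 : bi * (a * b) * bi = bi * a := by rw [mul_assoc, mul_assoc, h1, mul_one]
  rw [e2, e3] at e1
  rw [e1, smul_smul, hs, one_smul]

theorem InS.conj (hq : q ≠ 0) (h : BR q t (1 : A) v) {x : A} (hx : InS v x) :
    InS v (v .d2i * (x * v .d2)) := by
  have k2 : q ^ 2 * q⁻¹ ^ 2 = 1 := by field_simp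
  have k4 : q ^ 4 * q⁻¹ ^ 4 = 1 := by field_simp
  have r1 := conj_swap k2 h.d2d2i h.d2id2 h.d2c1
  have r2 := conj_swap k4 h.d2d2i h.d2id2 h.d2c2
  have r3 := conj_swap k2 h.d2d2i h.d2id2 h.d2r
  induction hx with
  | base a => rw [a.comm h, tl h.d2id2, one_mul]; exact .base a
  | rbase a =>
    rw [mul_assoc, a.comm h, tl r3, smul_mul_assoc, mul_assoc, tl h.d2id2, one_mul]
    exact .smul _ (.rbase a)
  | zero => rw [zero_mul, mul_zero]; exact .zero
  | add _ _ a b => rw [add_mul, mul_add]; exact a.add b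
  | smul c _ a => rw [smul_mul_assoc, mul_smul_comm]; exact a.smul c
  | c1 _ a => rw [mul_assoc, tl r1, smul_mul_assoc, mul_assoc]; exact .smul _ a.c1
  | c2 _ a => rw [mul_assoc, tl r2, smul_mul_assoc, mul_assoc]; exact .smul _ a.c2

def QS (v : BGen → A) (x : A) : Prop := ∃ M N : ℕ, InS v (v .c2 ^ M * (x * v .d2 ^ N))

theorem InS.c2p {x : A} (hx : InS v x) (k : ℕ) : InS v (v .c2 ^ k * x) := by
  induction k with
  | zero => simpa using hx
  | succ k ih => rw [pow_succ', mul_assoc]; exact ih.c2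

theorem InS.d2p (h : BR q t (1 : A) v) {x : A} (hx : InS v x) (k : ℕ) : InS v (x * v .d2 ^ k) := by
  induction k with
  | zero => simpa using hx
  | succ k ih => rw [pow_succ, ← mul_assoc]; exact ih.rd2 h

theorem InS.lift (h : BR q t (1 : A) v) {x : A} {M N : ℕ} (hx : InS v (v .c2 ^ M * (x * v .d2 ^ N)))
    (M' N' : ℕ) : InS v (v .c2 ^ (M' + M) * (x * v .d2 ^ (N + N'))) := by
  have := (hx.c2p M').d2p h N'
  simpa only [pow_add, mul_assoc] using this

theorem QS.add (h : BR q t (1 : A) v) {x y : A} (hx : QS v x) (hy : QS v y) : QS v (x + y) := by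
  obtain ⟨M, N, a⟩ := hx
  obtain ⟨M', N', b⟩ := hy
  refine ⟨M + M', N + N', ?_⟩
  have a' := a.lift h M' N'
  have b' := b.lift h M N
  rw [add_comm M' M] at a'
  rw [add_comm N' N] at b'
  rw [add_mul, mul_add]
  exact a'.add b'

theorem QS.smul (c : ℂ) {x : A} (hx : QS v x) : QS v (c • x) := by
  obtain ⟨M, N, a⟩ := hx
  refine ⟨M, N, ?_⟩
  rw [smul_mul_assoc, mul_smul_comm]
  exact a.smul c

theorem pow_swap {a g : A} {s : ℂ} (h : a * g = s • (g * a)) (M : ℕ) :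
    a ^ M * g = s ^ M • (g * a ^ M) := by
  induction M with
  | zero => simp
  | succ k ih =>
    rw [pow_succ', mul_assoc, ih, mul_smul_comm, ← mul_assoc, h, smul_mul_assoc, smul_smul, mul_assoc, ← pow_succ]

theorem flip_swap {a b : A} {s s' : ℂ} (hs : s' * s = 1) (h : b * a = s • (a * b)) :
    a * b = s' • (b * a) := by
  rw [h, smul_smul, hs, one_smul]

theorem QS.gen (hq : q ≠ 0) (h : BR q t (1 : A) v) (g : BGen) {x : A} (hx : QS v x) :
    QS v (v g * x) := by
  have k2 : q ^ 2 * q⁻¹ ^ 2 = 1 := by field_simp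
  have k4 : q ^ 4 * q⁻¹ ^ 4 = 1 := by field_simp
  have key : ∀ (g : A) (s : ℂ), v .c2 * g = s • (g * v .c2) →
      (∀ z, InS v z → InS v (g * z)) → QS v (g * x) := by
    intro g s hs hz
    obtain ⟨M, N, a⟩ := hx
    refine ⟨M, N, ?_⟩
    rw [mul_assoc, tl (pow_swap hs M), smul_mul_assoc, mul_assoc]
    exact (hz _ a).smul _
  cases g with
  | c1 => exact key _ 1 (by rw [h.c2c1, one_smul]) (fun z hz => hz.c1)
  | c2 => exact key _ 1 (by rw [one_smul]) (fun z hz => hz.c2)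
  | d1 => exact key _ _ (flip_swap k2 h.d1c2) (fun z hz => (hz.d1r h).1)
  | d2 => exact key _ _ (flip_swap k4 h.d2c2) (fun z hz => hz.d2 h)
  | r => exact key _ _ (flip_swap k2 h.rc2) (fun z hz => (hz.d1r h).2)
  | c2i =>
    obtain ⟨M, N, a⟩ := hx
    refine ⟨M + 1, N, ?_⟩
    rw [pow_succ, mul_assoc, mul_assoc, tl h.c2c2i, one_mul]
    exact a
  | d2i =>
    obtain ⟨M, N, a⟩ := hx
    refine ⟨M, N + 1, ?_⟩
    have r2 := conj_swap k4 h.d2d2i h.d2id2 h.d2c2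
    have k4' : q⁻¹ ^ 4 * q ^ 4 = 1 := by field_simp
    rw [mul_assoc, tl (pow_swap (flip_swap k4' r2) M), smul_mul_assoc, mul_assoc]
    have := (a.conj hq h).smul ((q⁻¹ ^ 4) ^ M)
    simpa only [pow_succ, mul_assoc] using this

theorem QS.all (hq : q ≠ 0) {v : BGen → AlgBt q t} (hv : ∀ g, v g = mkB q t (gB g)) (h : BR q t (1 : AlgBt q t) v) (x : AlgBt q t) :
    QS v x := by
  let S : Subalgebra ℂ (AlgBt q t) :=
    { carrier := {x | ∀ z, QS v z → QS v (x * z)}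
      mul_mem' := by
        intro a b ha hb z hz
        rw [mul_assoc]; exact ha _ (hb _ hz)
      add_mem' := by
        intro a b ha hb z hz
        rw [add_mul]; exact (ha _ hz).add h (hb _ hz)
      algebraMap_mem' := by
        intro c z hz
        rw [Algebra.algebraMap_eq_smul_one, smul_mul_assoc, one_mul]; exact hz.smul c }
  have := AlgBt.ind (S := S) (fun g z hz => by rw [← hv]; exact hz.gen hq h g) x 1
    ⟨0, 0, by simpa using InS.base InDp.one⟩
  simpa using this

theorem InDp.span {x : A} (hx : InDp v x) (h : BR q t (1 : A) v) :
    x ∈ Submodule.span ℂ (Set.range fun p : ℕ × ℕ => v .d1 ^ p.1 * v .d2 ^ p.2) := by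
  induction hx with
  | one => exact Submodule.subset_span ⟨(0, 0), by simp⟩
  | zero => exact Submodule.zero_mem _
  | add _ _ a b => exact Submodule.add_mem _ a b
  | smul c _ a => exact Submodule.smul_mem _ c a
  | d1 _ a =>
    refine Submodule.span_induction (p := fun x _ => v .d1 * x ∈ _) ?_ ?_ ?_ ?_ a
    · rintro _ ⟨p, rfl⟩
      exact Submodule.subset_span ⟨(p.1 + 1, p.2), by simp [pow_succ', mul_assoc]⟩
    · simp
    · intro x y _ _ ha hb; rw [mul_add]; exact Submodule.add_mem _ ha hb
    · intro c x _ ha; rw [mul_smul_comm]; exact Submodule.smul_mem _ c ha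
  | d2 _ a =>
    refine Submodule.span_induction (p := fun x _ => v .d2 * x ∈ _) ?_ ?_ ?_ ?_ a
    · rintro _ ⟨p, rfl⟩
      refine Submodule.subset_span ⟨(p.1, p.2 + 1), ?_⟩
      have : Commute (v .d2) (v .d1 ^ p.1) := Commute.pow_right h.d2d1 _
      simp only [pow_succ']
      rw [← mul_assoc, ← mul_assoc, this.eq]
    · simp
    · intro x y _ _ ha hb; rw [mul_add]; exact Submodule.add_mem _ ha hb
    · intro c x _ ha; rw [mul_smul_comm]; exact Submodule.smul_mem _ c ha

def mono (v : BGen → A) (z : (ℕ × ℕ) × (Bool × ℕ × ℕ)) : A :=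
  v .c1 ^ z.1.1 * (v .c2 ^ z.1.2 * ((if z.2.1 then v .r else 1) * (v .d1 ^ z.2.2.1 * v .d2 ^ z.2.2.2)))

theorem InS.span {x : A} (hx : InS v x) (h : BR q t (1 : A) v) :
    x ∈ Submodule.span ℂ (Set.range (mono v)) := by
  induction hx with
  | base a =>
    refine Submodule.span_le.2 ?_ (a.span h)
    rintro _ ⟨p, rfl⟩
    exact Submodule.subset_span ⟨((0, 0), (false, p)), by simp [mono]⟩
  | rbase a =>
    refine Submodule.span_induction (p := fun x _ => v .r * x ∈ _) ?_ ?_ ?_ ?_ (a.span h)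
    · rintro _ ⟨p, rfl⟩
      exact Submodule.subset_span ⟨((0, 0), (true, p)), by simp [mono]⟩
    · simp
    · intro x y _ _ ha hb; rw [mul_add]; exact Submodule.add_mem _ ha hb
    · intro c x _ ha; rw [mul_smul_comm]; exact Submodule.smul_mem _ c ha
  | zero => exact Submodule.zero_mem _
  | add _ _ a b => exact Submodule.add_mem _ a b
  | smul c _ a => exact Submodule.smul_mem _ c a
  | c1 _ a =>
    refine Submodule.span_induction (p := fun x _ => v .c1 * x ∈ _) ?_ ?_ ?_ ?_ a
    · rintro _ ⟨p, rfl⟩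
      exact Submodule.subset_span ⟨((p.1.1 + 1, p.1.2), p.2), by simp only [mono, pow_succ', mul_assoc]⟩
    · simp
    · intro x y _ _ ha hb; rw [mul_add]; exact Submodule.add_mem _ ha hb
    · intro c x _ ha; rw [mul_smul_comm]; exact Submodule.smul_mem _ c ha
  | c2 _ a =>
    refine Submodule.span_induction (p := fun x _ => v .c2 * x ∈ _) ?_ ?_ ?_ ?_ a
    · rintro _ ⟨p, rfl⟩
      refine Submodule.subset_span ⟨((p.1.1, p.1.2 + 1), p.2), ?_⟩
      have : Commute (v .c2) (v .c1 ^ p.1.1) := Commute.pow_right h.c2c1 _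
      simp only [mono]
      rw [tl this.eq, mul_assoc, pow_succ', mul_assoc]
    · simp
    · intro x y _ _ ha hb; rw [mul_add]; exact Submodule.add_mem _ ha hb
    · intro c x _ ha; rw [mul_smul_comm]; exact Submodule.smul_mem _ c ha

theorem br_self (q t : ℂ) : BR q t (1 : AlgBt q t) (fun g => mkB q t (gB g)) := by
  have k : ∀ {a b}, BRel q t a b → mkB q t a = mkB q t b := fun h => RingQuot.mkAlgHom_rel ℂ h
  constructor
  · simp
  · simp
  · simp
  · simpa using k .c2c2i
  · simpa using k .c2ic2
  · simpa using k .d2d2i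
  · simpa using k .d2id2
  · simpa using k .c2c1
  · simpa using k .d2d1
  · simpa only [map_mul, map_smul, map_add, map_sub] using k .d2c2
  · simpa only [map_mul, map_smul, map_add, map_sub] using k .d2c1
  · simpa only [map_mul, map_smul, map_add, map_sub] using k .d1c2
  · simpa only [map_mul, map_smul, map_add, map_sub] using k .d1c1
  · simpa only [map_mul, map_smul, map_add, map_sub] using k .d2r
  · simpa only [map_mul, map_smul, map_add, map_sub] using k .rc2
  · simpa only [map_mul, map_smul, map_add, map_sub] using k .d1r
  · simpa only [map_mul, map_smul, map_add, map_sub] using k .rc1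
  · simpa only [map_mul, map_smul, map_add, map_sub] using k .rr

end Span

section Fin
variable {q t : ℂ}

theorem phi_inj_gen {K : Type*} [Field K] [Algebra ℂ K] {s w wi : K →ₐ[ℂ] K} {y1 y2 : K}
    (hK : KD q t s w wi y1 y2)
    (hLI : LinearIndependent ℂ (fun p : ℕ × ℕ => (y1 + y2) ^ p.1 * (q ^ 2 • (y1 * y2)) ^ p.2)) (hq : q ≠ 0) (ht : t ≠ 0) (ht2 : 1 + t ^ 2 ≠ 0) {Wi Zi : DAHA q t}
    (hD : DH q t (T q t) (X1 q t) (X2 q t) (Y1 q t) (Y2 q t) Wi Zi)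
    (Φ : AlgBt q t →ₗ[ℂ] DAHA q t) (hm : ∀ x y, Φ (x * y) = Φ x * Φ y) (h1 : Φ 1 = ee t (T q t))
    (hv : ∀ g, Φ (mkB q t (gB g)) = vH q t (T q t) (X1 q t) (X2 q t) (Y1 q t) (Y2 q t) Wi Zi g) :
    Function.Injective Φ := by
  obtain ⟨σ, hc1, hc2, h0, hli⟩ := hK.sigma hq ht ht2 hD Φ hm h1 hv
  let b : ℕ × ℕ → fixS s := fun p => ⟨(y1 + y2) ^ p.1 * (q ^ 2 • (y1 * y2)) ^ p.2, by
    show s _ = _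
    have hsm : s (q ^ 2 • (y1 * y2)) = q ^ 2 • s (y1 * y2) := map_smul s _ _
    simp only [map_mul, map_pow, map_add, hsm, hK.s1, hK.s2, AlgHom.id_apply]
    rw [add_comm y2, mul_comm y2]⟩
  have hb : LinearIndependent ℂ b :=
    LinearIndependent.of_comp (fixS s).val.toLinearMap hLI
  have hall := linearIndependent_smul hb hli
  have p1 : ∀ (a : ℕ) x i j, σ (c1 q t ^ a * x) i j = (y1 + y2) ^ a * σ x i j := by
    intro a
    induction a with
    | zero => intro x i j; simp
    | succ k ih => intro x i j; rw [pow_succ', mul_assoc, hc1, ih, pow_succ', mul_assoc]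
  have p2 : ∀ (a : ℕ) x i j, σ (c2 q t ^ a * x) i j = (q ^ 2 • (y1 * y2)) ^ a * σ x i j := by
    intro a
    induction a with
    | zero => intro x i j; simp
    | succ k ih => intro x i j; rw [pow_succ' (c2 q t), mul_assoc, hc2, ih, pow_succ' (q ^ 2 • (y1 * y2)), mul_assoc]
  set v : BGen → AlgBt q t := fun g => mkB q t (gB g) with hvv
  have hB : BR q t (1 : AlgBt q t) v := br_self q t
  have hmono : LinearIndependent ℂ (fun z => σ (mono v z)) := by
    have : (fun z => σ (mono v z)) = fun z : (ℕ × ℕ) × (Bool × ℕ × ℕ) => b z.1 • σ ((if z.2.1 then rr q t else 1) * (d1 q t ^ z.2.2.1 * d2 q t ^ z.2.2.2)) := by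
      funext z
      funext i j
      show σ (c1 q t ^ z.1.1 * (c2 q t ^ z.1.2 * ((if z.2.1 then rr q t else 1) * (d1 q t ^ z.2.2.1 * d2 q t ^ z.2.2.2)))) i j = _
      rw [p1, p2, ← mul_assoc]
      rfl
    rw [this]
    exact hall
  have hzero : ∀ x ∈ Submodule.span ℂ (Set.range (mono v)), σ x = 0 → x = 0 := by
    intro x hx hs
    obtain ⟨c, rfl⟩ := Finsupp.mem_span_range_iff_exists_finsupp.1 hx
    have : c = 0 := by
      refine (linearIndependent_iff.1 hmono) c ?_
      rw [← hs, Finsupp.linearCombination_apply, Finsupp.sum, Finsupp.sum, map_sum]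
      simp only [map_smul]
    rw [this]; simp
  rw [injective_iff_map_eq_zero]
  intro x hx
  obtain ⟨M, N, hS⟩ := QS.all hq (fun _ => rfl) hB x
  have z := hzero _ (hS.span hB) (h0 _ (by rw [hm, hm, hx]; simp))
  have u1 : (v .c2i) ^ M * v .c2 ^ M = 1 := by
    have : Commute (v .c2i) (v .c2) := by rw [Commute, SemiconjBy, hB.c2c2i, hB.c2ic2]
    rw [← this.mul_pow, hB.c2ic2, one_pow]
  have u2 : v .d2 ^ N * (v .d2i) ^ N = 1 := by
    have : Commute (v .d2) (v .d2i) := by rw [Commute, SemiconjBy, hB.d2d2i, hB.d2id2]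
    rw [← this.mul_pow, hB.d2d2i, one_pow]
  calc x = (v .c2i) ^ M * (v .c2 ^ M * (x * v .d2 ^ N)) * (v .d2i) ^ N := by
        rw [tl u1, one_mul, mul_assoc, u2, mul_one]
    _ = 0 := by rw [z]; simp

theorem phi_inj (hq : q ≠ 0) (ht : t ≠ 0) (ht2 : 1 + t ^ 2 ≠ 0) {Wi Zi : DAHA q t}
    (hD : DH q t (T q t) (X1 q t) (X2 q t) (Y1 q t) (Y2 q t) Wi Zi)
    (Φ : AlgBt q t →ₗ[ℂ] DAHA q t) (hm : ∀ x y, Φ (x * y) = Φ x * Φ y) (h1 : Φ 1 = ee t (T q t))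
    (hv : ∀ g, Φ (mkB q t (gB g)) = vH q t (T q t) (X1 q t) (X2 q t) (Y1 q t) (Y2 q t) Wi Zi g) :
    Function.Injective Φ := by
  obtain ⟨s, w, wi, y1, y2, hK, hLI⟩ := exists_KD (q := q) (t := t) hq ht
  exact phi_inj_gen hK hLI hq ht ht2 hD Φ hm h1 hv

theorem daha_gen (hq : q ≠ 0) (ht : t ≠ 0) (S : Subalgebra ℂ (DAHA q t)) (h1 : T q t ∈ S) (h2 : X1 q t ∈ S)
    (h3 : X2 q t ∈ S) (h4 : Y1 q t ∈ S) (h5 : Y2 q t ∈ S) (h6 : Y2i q t * Y1i q t ∈ S)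
    (h7 : X2i q t * X1i q t ∈ S) (x : DAHA q t) : x ∈ S := by
  obtain ⟨-, a1, a2, a3, a4, a5⟩ := dh_daha q t hq ht
  obtain ⟨y, rfl⟩ := RingQuot.mkAlgHom_surjective ℂ (DRel q t) x
  induction y using FreeAlgebra.induction with
  | grade0 r => rw [AlgHom.commutes]; exact S.algebraMap_mem r
  | grade1 g =>
    cases g with
    | T => exact h1
    | Ti =>
      show Ti q t ∈ S
      rw [a1]; exact S.sub_mem h1 (S.smul_mem S.one_mem _)
    | X1 => exact h2
    | X1i => show X1i q t ∈ S; rw [a2]; exact S.mul_mem h3 h7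
    | X2 => exact h3
    | X2i => show X2i q t ∈ S; rw [a3]; exact S.mul_mem h2 h7
    | Y1 => exact h4
    | Y1i => show Y1i q t ∈ S; rw [a4]; exact S.mul_mem h5 h6
    | Y2 => exact h5
    | Y2i => show Y2i q t ∈ S; rw [a5]; exact S.mul_mem h4 h6
  | mul a b ha hb => rw [map_mul]; exact S.mul_mem ha hb
  | add a b ha hb => rw [map_add]; exact S.add_mem ha hb

end Fin

/-- There is a unique ℂ-algebra isomorphism `HC` from `ℬ_t` onto the
spherical double affine Hecke algebra `eH_{t,q}e`, determined by
`HC(c₁) = e(Y₁+Y₂)e`, `HC(c₂) = q²·e(Y₁Y₂)e`, `HC(d₁) = e(X₁+X₂)e`,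
`HC(d₂) = q²·e(X₁X₂)e`, `HC(r) = e(t⁻²Y₁X₁ + Y₂X₂)e`.  (Since the unit of
`eH_{t,q}e` is `e` rather than the unit of `H_{t,q}`, the map is formalized as a
multiplicative ℂ-linear map with `HC(1) = e`, injective, and with image exactly
`eH_{t,q}e = {e·y·e : y ∈ H_{t,q}}`.) -/
theorem stmt19 (q t : ℂ) (hq : q ≠ 0) (ht : t ≠ 0) (ht2 : t ^ 2 ≠ -1) :
    ∃! Φ : AlgBt q t →ₗ[ℂ] DAHA q t,
      (∀ x y : AlgBt q t, Φ (x * y) = Φ x * Φ y) ∧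
      Φ 1 = eSym q t ∧
      Function.Injective Φ ∧
      Set.range Φ = {x : DAHA q t | ∃ y : DAHA q t, x = eSym q t * y * eSym q t} ∧
      Φ (c1 q t) = eSym q t * (Y1 q t + Y2 q t) * eSym q t ∧
      Φ (c2 q t) = (q ^ 2) • (eSym q t * (Y1 q t * Y2 q t) * eSym q t) ∧
      Φ (d1 q t) = eSym q t * (X1 q t + X2 q t) * eSym q t ∧
      Φ (d2 q t) = (q ^ 2) • (eSym q t * (X1 q t * X2 q t) * eSym q t) ∧
      Φ (rr q t)
        = eSym q t * ((t⁻¹ ^ 2) • (Y1 q t * X1 q t) + Y2 q t * X2 q t) * eSym q t := by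

  have ht2' : 1 + t ^ 2 ≠ 0 := fun h => ht2 (by linear_combination h)
  have hD := (dh_daha q t hq ht).1
  have i := hD.e_e ht ht2'
  obtain ⟨Φ, hm, h1, hv⟩ := (hD.br hq ht ht2').exists_phi
  have hinj := phi_inj hq ht ht2' hD Φ hm h1 hv
  have hB := br_self q t
  have es : eSym q t = ee t (T q t) := rfl
  have comm : ∀ a : DAHA q t, T q t * a = a * T q t → ee t (T q t) * a * ee t (T q t) = a * ee t (T q t) := by
    intro a ha
    rw [e_comm ha, mul_assoc, i]
  have v1 : Φ (c1 q t) = eSym q t * (Y1 q t + Y2 q t) * eSym q t := by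
    rw [es, comm _ hD.T_c1]; exact hv .c1
  have v2 : Φ (c2 q t) = (q ^ 2) • (eSym q t * (Y1 q t * Y2 q t) * eSym q t) := by
    rw [es, comm _ hD.T_W]; exact hv .c2
  have v3 : Φ (d1 q t) = eSym q t * (X1 q t + X2 q t) * eSym q t := by
    rw [es, comm _ hD.T_d1]; exact hv .d1
  have v4 : Φ (d2 q t) = (q ^ 2) • (eSym q t * (X1 q t * X2 q t) * eSym q t) := by
    rw [es, comm _ hD.T_Z]; exact hv .d2
  have v5 : Φ (rr q t)
        = eSym q t * ((t⁻¹ ^ 2) • (Y1 q t * X1 q t) + Y2 q t * X2 q t) * eSym q t := by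
    rw [es, hD.r_eq ht]; exact hv .r
  refine ⟨Φ, ⟨hm, h1, hinj, ?_, v1, v2, v3, v4, v5⟩, ?_⟩
  · ext x
    constructor
    · rintro ⟨y, rfl⟩
      refine ⟨Φ y, ?_⟩
      rw [es, ← h1, ← hm, ← hm, one_mul, mul_one]
    · rintro ⟨y, rfl⟩
      have := hD.surj hq ht ht2' (daha_gen hq ht) (LinearMap.range Φ) ⟨1, h1⟩ ?_ (fun g => ⟨_, hv g⟩) y
      · exact this
      · rintro _ ⟨a, rfl⟩ _ ⟨b, rfl⟩
        exact ⟨a * b, hm a b⟩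
  · rintro Ψ ⟨gm, g1, -, -, w1, w2, w3, w4, w5⟩
    have inv : ∀ a b : AlgBt q t, a * b = 1 → b * a = 1 → Ψ a = Φ a → Ψ b = Φ b := by
      intro a b hab hba hh
      calc Ψ b = Ψ (b * 1) := by rw [mul_one]
        _ = Ψ b * Φ (a * b) := by rw [gm, g1, hab, h1, es]
        _ = Ψ (b * a) * Φ b := by rw [hm, ← hh, ← mul_assoc, gm]
        _ = Φ 1 * Φ b := by rw [hba, g1, h1, es]
        _ = Φ b := by rw [← hm, one_mul]
    have k1 : Ψ (c1 q t) = Φ (c1 q t) := w1.trans v1.symm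
    have k2 : Ψ (c2 q t) = Φ (c2 q t) := w2.trans v2.symm
    have k3 : Ψ (d1 q t) = Φ (d1 q t) := w3.trans v3.symm
    have k4 : Ψ (d2 q t) = Φ (d2 q t) := w4.trans v4.symm
    have k5 : Ψ (rr q t) = Φ (rr q t) := w5.trans v5.symm
    let S : Subalgebra ℂ (AlgBt q t) :=
      { carrier := {x | Ψ x = Φ x}
        mul_mem' := by
          intro a b ha hb
          show Ψ (a * b) = Φ (a * b)
          rw [gm, hm, ha, hb]
        add_mem' := by
          intro a b ha hb
          show Ψ (a + b) = Φ (a + b)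
          rw [map_add, map_add, ha, hb]
        algebraMap_mem' := by
          intro c
          show Ψ _ = Φ _
          rw [Algebra.algebraMap_eq_smul_one, map_smul, map_smul, g1, h1, es] }
    refine LinearMap.ext fun x => AlgBt.ind (S := S) ?_ x
    intro g
    cases g with
    | c1 => exact k1
    | c2 => exact k2
    | d1 => exact k3
    | d2 => exact k4
    | r => exact k5
    | c2i => exact inv _ _ hB.c2c2i hB.c2ic2 k2
    | d2i => exact inv _ _ hB.d2d2i hB.d2id2 k4
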